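/- Let k ≥ 1 be a fixed integer. Suppose p_s = o(1), K_n ≥ 2 for all sufficiently large n, and p_e = (ln n + (k−1)·ln ln n + α_n)/n with lim_{n→∞} α_n = −∞. Then for any two distinct nodes v_x, v_y of 𝔾_on(n,K_n,P_n,p_n): (a) if there exists ε > 0 with n·p_e > ε for all sufficiently large n, then for any fixed nonnegative integer ℓ, P[D_{x,ℓ} ∩ D_{y,ℓ} ∩ (E_{xy})^c] ∼ (ℓ!)^{−2}·(p_e·n)^{2ℓ}·e^{−2·p_e·n}; (b) P[D_{x,0} ∩ D_{y,0} ∩ (E_{xy})^c] ∼ e^{−2·p_e·n}. -/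

import Mathlib

open MeasureTheory Filter Asymptotics
open scoped ENNReal

noncomputable section

/-- Key rings: `K`-element subsets of a key pool of size `P`. -/
abbrev KeyRing (P K : ℕ) : Type := {s : Finset (Fin P) // s.card = K}

instance (P K : ℕ) : MeasurableSpace (KeyRing P K) := ⊤

/-- The uniform probability measure on key rings. -/
def uniformKeyMeasure (P K : ℕ) : Measure (KeyRing P K) :=
  (Fintype.card (KeyRing P K) : ℝ≥0∞)⁻¹ • (Measure.count : Measure (KeyRing P K))

/-- The Bernoulli measure with parameter `p` on `Bool`. -/
def bern (p : ℝ) : Measure Bool :=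
  ENNReal.ofReal p • Measure.dirac true + ENNReal.ofReal (1 - p) • Measure.dirac false

/-- Sample space underlying `𝔾_on(n, K, P, p)`: independent key rings for the `n`
nodes together with independent on/off channel states for each pair of nodes. -/
abbrev GonSpace (n K P : ℕ) : Type :=
  (Fin n → KeyRing P K) × (Sym2 (Fin n) → Bool)

/-- The probability measure of the model `𝔾_on(n, K, P, p)`: the key rings of the
`n` nodes are independent and uniform, and the channels are independent
Bernoulli(`p`) variables, independent of the key rings. -/
def gonMeasure (n K P : ℕ) (p : ℝ) : Measure (GonSpace n K P) :=
  (Measure.pi fun _ : Fin n => uniformKeyMeasure P K).prod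
    (Measure.pi fun _ : Sym2 (Fin n) => bern p)

/-- The random graph `𝔾_on`: an edge is present iff the key rings intersect and the
channel between the two nodes is on. -/
def gonGraph {n K P : ℕ} (ω : GonSpace n K P) : SimpleGraph (Fin n) where
  Adj i j := i ≠ j ∧ ((ω.1 i).1 ∩ (ω.1 j).1).Nonempty ∧ ω.2 s(i, j) = true
  symm := by
    constructor
    rintro i j ⟨h1, h2, h3⟩
    exact ⟨h1.symm, by rwa [Finset.inter_comm], by rwa [Sym2.eq_swap]⟩
  loopless := ⟨fun i h => h.1 rfl⟩

/-- The random key graph `G(n, K, P)`: an edge is present iff the key rings intersect. -/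
def rkgGraph {n K P : ℕ} (ω : Fin n → KeyRing P K) : SimpleGraph (Fin n) where
  Adj i j := i ≠ j ∧ ((ω i).1 ∩ (ω j).1).Nonempty
  symm := by
    constructor
    rintro i j ⟨h1, h2⟩
    exact ⟨h1.symm, by rwa [Finset.inter_comm]⟩
  loopless := ⟨fun i h => h.1 rfl⟩

/-- The probability measure of the random key graph model. -/
def rkgMeasure (n K P : ℕ) : Measure (Fin n → KeyRing P K) :=
  Measure.pi fun _ : Fin n => uniformKeyMeasure P K

/-- Degree of a vertex. -/
def gDeg {V : Type*} (G : SimpleGraph V) (v : V) : ℕ := Nat.card {w // G.Adj v w}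

/-- Minimum vertex degree. -/
def minDeg {V : Type*} (G : SimpleGraph V) : ℕ := sInf (Set.range (gDeg G))

/-- A graph is `k`-connected if it remains connected after the removal of any
`k - 1` of its vertices. -/
def KConnected {V : Type*} (G : SimpleGraph V) (k : ℕ) : Prop :=
  ∀ S : Finset V, S.card ≤ k - 1 → (G.induce ((S : Set V)ᶜ)).Connected

/-- Vertex connectivity: the least number of vertices whose deletion disconnects
the graph. -/
def vertexConn {V : Type*} (G : SimpleGraph V) : ℕ :=
  sInf {m | ∃ S : Finset V, S.card = m ∧ ¬ (G.induce ((S : Set V)ᶜ)).Connected}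

/-- `p_s`: the probability that two key rings share at least one key. -/
def psf (K P : ℕ) : ℝ :=
  if 2 * K ≤ P then 1 - (Nat.choose (P - K) K : ℝ) / (Nat.choose P K : ℝ) else 1

/-- `p_e = p · p_s`: the probability of an edge in `𝔾_on`. -/
def pef (K P : ℕ) (p : ℝ) : ℝ := p * psf K P

/-- The event `D_{x,ℓ}` that the node with index `x` has degree exactly `ℓ`. -/
def degEvent (n K P : ℕ) (x ℓ : ℕ) : Set (GonSpace n K P) :=
  {ω | ∃ hx : x < n, gDeg (gonGraph ω) ⟨x, hx⟩ = ℓ}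

/-- The event `E_{xy}` that the edge between the nodes with indices `x`, `y` is present. -/
def edgeEvent (n K P : ℕ) (x y : ℕ) : Set (GonSpace n K P) :=
  {ω | ∃ (hx : x < n) (hy : y < n), (gonGraph ω).Adj ⟨x, hx⟩ ⟨y, hy⟩}

/-- The event that the key rings of nodes `x` and `y` share exactly `u` keys. -/
def interCardEvent (n K P : ℕ) (x y u : ℕ) : Set (GonSpace n K P) :=
  {ω | ∃ (hx : x < n) (hy : y < n), ((ω.1 ⟨x, hx⟩).1 ∩ (ω.1 ⟨y, hy⟩).1).card = u}

/-- The event `K_{xy}` that the key rings of nodes `x` and `y` share at least one key. -/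
def keyShareEvent (n K P : ℕ) (x y : ℕ) : Set (GonSpace n K P) :=
  {ω | ∃ (hx : x < n) (hy : y < n), ((ω.1 ⟨x, hx⟩).1 ∩ (ω.1 ⟨y, hy⟩).1).Nonempty}

/-- `r_n = min(⌊P/K⌋, ⌊n/2⌋)`. -/
def rn (n K P : ℕ) : ℕ := min (P / K) (n / 2)

/-- The threshold array `J`. -/
def Jarr (n K P : ℕ) (ε lam mu : ℝ) (i : ℕ) : ℕ :=
  if i ≤ rn n K P then max ⌊(1 + ε) * (K : ℝ)⌋₊ ⌊lam * (K : ℝ) * (i : ℝ)⌋₊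
  else ⌊mu * (P : ℝ)⌋₊

/-- The event `𝓔(J)`: some set `T` of at least two nodes has a union of key rings of
size at most `J_{|T|}`. -/
def EJ (n K P : ℕ) (ε lam mu : ℝ) : Set (GonSpace n K P) :=
  {ω | ∃ T : Finset (Fin n), 2 ≤ T.card ∧
    (T.biUnion fun i => (ω.1 i).1).card ≤ Jarr n K P ε lam mu T.card}

/-!
Condition on the key rings `A` and `B` of the nodes `x` and `y`. Every other node is then,
independently of the others, adjacent to `x` with probability `e = p_e`, to `y` with probability
`e`, and to both with a probability `q` depending on `(A, B)`. Summing over the pairs of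
`ℓ`-element neighbourhoods gives the exact conditional probability of the joint degree event, which
is the squared Poisson weight of mean `n e` up to a factor governed by `n q`, `n e²` and
`q / (n e²)`.

Disjoint key rings have `q = O(e²)`, make the factor tend to `1`, and have probability
`1 - p_s → 1`. If `|A ∩ B| = u > 0`, the factor is `O(s ^ u)` with `s = exp (n p² K / P)`, and the
average of `s ^ u` over such `B` is at most `exp (s K² / P) - 1`. This tends to `0`: since
`p_s ∼ K² / P`, the hypothesis `n e ≤ c log n` with `c < 2 ≤ K` makes `n p² K / P` at most
`b p log n` for some `b < 1`.
-/

section RandomSubset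

open Finset
open scoped BigOperators

theorem descFactorial_mul_pow_le {a b : ℕ} (h : a ≤ b) (j : ℕ) :
    a.descFactorial j * b ^ j ≤ b.descFactorial j * a ^ j := by
  induction j with
  | zero => simp
  | succ j ih =>
    have hj : (a - j) * b ≤ (b - j) * a := by
      rw [Nat.sub_mul, Nat.sub_mul, mul_comm a b]
      exact Nat.sub_le_sub_left (Nat.mul_le_mul_left j h) _
    calc a.descFactorial (j + 1) * b ^ (j + 1)
        = ((a - j) * b) * (a.descFactorial j * b ^ j) := by
          rw [Nat.descFactorial_succ, pow_succ]; ring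
      _ ≤ ((b - j) * a) * (b.descFactorial j * a ^ j) := Nat.mul_le_mul hj ih
      _ = _ := by rw [Nat.descFactorial_succ, pow_succ]; ring

theorem choose_mul_pow_le {a b : ℕ} (h : a ≤ b) (j : ℕ) :
    a.choose j * b ^ j ≤ b.choose j * a ^ j := by
  have := descFactorial_mul_pow_le h j
  simp only [Nat.descFactorial_eq_factorial_mul_choose, mul_assoc] at this
  exact Nat.le_of_mul_le_mul_left this j.factorial_pos

theorem choose_sub_sub_mul_pow_le {N k j : ℕ} (hj : j ≤ k) (hk : k ≤ N) :
    (N - j).choose (k - j) * N ^ j ≤ N.choose k * k ^ j := by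
  refine Nat.le_of_mul_le_mul_left ?_ (Nat.choose_pos (hj.trans hk))
  calc N.choose j * ((N - j).choose (k - j) * N ^ j)
      = N.choose k * (k.choose j * N ^ j) := by rw [← mul_assoc, ← Nat.choose_mul hj, mul_assoc]
    _ ≤ N.choose k * (N.choose j * k ^ j) := Nat.mul_le_mul_left _ (choose_mul_pow_le hk j)
    _ = N.choose j * (N.choose k * k ^ j) := by ring

variable {α : Type*} [DecidableEq α] {U : Finset α} {k : ℕ}

theorem expect_powersetCard_subset_le (T : Finset α) :
    𝔼 B ∈ U.powersetCard k, (if T ⊆ B then (1 : ℝ) else 0) ≤ ((k : ℝ) / #U) ^ #T := by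
  rcases (U.powersetCard k).eq_empty_or_nonempty with hU | hU
  · simpa [hU] using pow_nonneg (by positivity) _
  have hk : k ≤ #U := powersetCard_nonempty.1 hU
  by_cases hT : T ⊆ U ∧ #T ≤ k
  swap
  · rw [expect_eq_zero fun B hB => if_neg fun hTB => hT ?_]
    · positivity
    · rw [mem_powersetCard] at hB
      exact ⟨hTB.trans hB.1, hB.2 ▸ card_le_card hTB⟩
  obtain ⟨hTU, hTk⟩ := hT
  have hchoose : (0 : ℝ) < (#U).choose k := by exact_mod_cast Nat.choose_pos hk
  rw [expect_eq_sum_div_card, sum_boole, card_filter_powersetCard_subset _ _ _ hTU hTk,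
    card_powersetCard, div_pow, div_le_iff₀ hchoose]
  rcases Nat.eq_zero_or_pos #U with h0 | h0
  · obtain rfl : T = ∅ := by rwa [← subset_empty, ← card_eq_zero.1 h0]
    simp
  · rw [div_mul_eq_mul_div, le_div_iff₀ (by positivity), mul_comm ((k : ℝ) ^ _)]
    exact_mod_cast choose_sub_sub_mul_pow_le hTk hk

theorem one_add_pow_card_inter (A B : Finset α) (t : ℝ) :
    (1 + t) ^ #(A ∩ B) = ∑ T ∈ A.powerset, t ^ #T * if T ⊆ B then 1 else 0 := by
  rw [← prod_const, prod_one_add]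
  simp_rw [prod_const, mul_ite, mul_one, mul_zero, ← sum_filter]
  refine sum_congr ?_ fun _ _ => rfl
  ext T
  simp only [mem_powerset, mem_filter, subset_inter_iff]

theorem expect_powersetCard_pow_card_inter_le (A : Finset α) {t : ℝ} (ht : 0 ≤ t) :
    𝔼 B ∈ U.powersetCard k, (1 + t) ^ #(A ∩ B) ≤ Real.exp (t * (#A * k / #U)) := by
  calc 𝔼 B ∈ U.powersetCard k, (1 + t) ^ #(A ∩ B)
      = ∑ T ∈ A.powerset, t ^ #T * 𝔼 B ∈ U.powersetCard k, if T ⊆ B then 1 else 0 := by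
        simp_rw [one_add_pow_card_inter, expect_sum_comm, mul_expect]
    _ ≤ ∑ T ∈ A.powerset, t ^ #T * ((k : ℝ) / #U) ^ #T := by
        gcongr with T
        exact expect_powersetCard_subset_le T
    _ = (1 + t * (k / #U)) ^ #A := by
        simp_rw [← mul_pow, ← prod_const, ← prod_one_add]
    _ ≤ Real.exp (t * (k / #U)) ^ #A := by
        gcongr
        linarith [Real.add_one_le_exp (t * ((k : ℝ) / #U))]
    _ = Real.exp (t * (#A * k / #U)) := by
        rw [← Real.exp_nat_mul]
        ring_nf

theorem expect_powersetCard_nonempty_inter_pow_le (hk : k ≤ #U) (A : Finset α) {s : ℝ}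
    (hs : 0 ≤ s) :
    𝔼 B ∈ U.powersetCard k, (if (A ∩ B).Nonempty then s ^ #(A ∩ B) else 0) ≤
      Real.exp (s * (#A * k / #U)) - 1 := by
  calc 𝔼 B ∈ U.powersetCard k, (if (A ∩ B).Nonempty then s ^ #(A ∩ B) else 0)
      ≤ 𝔼 B ∈ U.powersetCard k, ((1 + s) ^ #(A ∩ B) - 1) := by
        refine expect_le_expect fun B _ => ?_
        split_ifs with h
        · have := pow_add_pow_le zero_le_one hs h.card_pos.ne'
          rw [one_pow] at this
          linarith
        · exact sub_nonneg.2 (one_le_pow₀ (by linarith))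
    _ = 𝔼 B ∈ U.powersetCard k, (1 + s) ^ #(A ∩ B) - 1 := by
        rw [expect_sub_distrib, expect_const (powersetCard_nonempty.2 hk)]
    _ ≤ Real.exp (s * (#A * k / #U)) - 1 := by
        gcongr
        exact expect_powersetCard_pow_card_inter_le A hs

theorem ite_nonempty_inter_le_sum (A A' B : Finset α) :
    (if (A ∩ B).Nonempty ∧ (A' ∩ B).Nonempty then (1 : ℝ) else 0) ≤
      ∑ a ∈ A, ∑ a' ∈ A', if {a, a'} ⊆ B then 1 else 0 := by
  split_ifs with h
  · obtain ⟨⟨a, ha⟩, a', ha'⟩ := h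
    rw [mem_inter] at ha ha'
    refine le_trans ?_ (single_le_sum (fun _ _ => sum_nonneg fun _ _ => by positivity) ha.1)
    refine le_trans ?_ (single_le_sum (fun _ _ => by positivity) ha'.1)
    rw [if_pos (by simp [insert_subset_iff, ha.2, ha'.2])]
  · positivity

theorem expect_powersetCard_nonempty_inter_and_le (A A' : Finset α) :
    𝔼 B ∈ U.powersetCard k, (if (A ∩ B).Nonempty ∧ (A' ∩ B).Nonempty then (1 : ℝ) else 0) ≤
      #(A ∩ A') * ((k : ℝ) / #U) + #A * #A' * ((k : ℝ) / #U) ^ 2 := by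
  set r : ℝ := (k : ℝ) / #U
  have : 0 ≤ r := by positivity
  have hpair : ∀ a a' : α, 𝔼 B ∈ U.powersetCard k, (if {a, a'} ⊆ B then (1 : ℝ) else 0) ≤
      (if a = a' then r else 0) + r ^ 2 := by
    intro a a'
    have h := expect_powersetCard_subset_le (U := U) (k := k) {a, a'}
    split_ifs with haa
    · subst haa
      simp only [pair_eq_singleton, card_singleton, pow_one] at h ⊢
      linarith [sq_nonneg r]
    · rw [card_pair haa] at h
      simpa using h
  calc 𝔼 B ∈ U.powersetCard k, (if (A ∩ B).Nonempty ∧ (A' ∩ B).Nonempty then (1 : ℝ) else 0)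
      ≤ 𝔼 B ∈ U.powersetCard k, ∑ a ∈ A, ∑ a' ∈ A', if {a, a'} ⊆ B then (1 : ℝ) else 0 :=
        expect_le_expect fun B _ => ite_nonempty_inter_le_sum A A' B
    _ = ∑ a ∈ A, ∑ a' ∈ A', 𝔼 B ∈ U.powersetCard k, if {a, a'} ⊆ B then (1 : ℝ) else 0 := by
        simp_rw [expect_sum_comm]
    _ ≤ ∑ a ∈ A, ∑ a' ∈ A', ((if a = a' then r else 0) + r ^ 2) := by
        gcongr with a _ a' _
        exact hpair a a'
    _ = #(A ∩ A') * r + #A * #A' * r ^ 2 := by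
        simp only [sum_add_distrib, sum_ite_eq, sum_ite_mem, sum_const, nsmul_eq_mul]
        ring

theorem expect_powersetCard_nonempty_inter {A : Finset α} (hA : A ⊆ U) (hk : k ≤ #U) :
    𝔼 B ∈ U.powersetCard k, (if (A ∩ B).Nonempty then (1 : ℝ) else 0) =
      1 - ((#U - #A).choose k : ℝ) / (#U).choose k := by
  have hdisj : {B ∈ U.powersetCard k | ¬ (A ∩ B).Nonempty} = (U \ A).powersetCard k := by
    ext B
    simp only [mem_filter, mem_powersetCard, not_nonempty_iff_eq_empty,
      ← disjoint_iff_inter_eq_empty, subset_sdiff, disjoint_comm (a := A)]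
    tauto
  have hite : ∀ B : Finset α, (if (A ∩ B).Nonempty then (1 : ℝ) else 0) =
      1 - if ¬ (A ∩ B).Nonempty then 1 else 0 := fun B => by split_ifs <;> simp
  simp_rw [hite, expect_sub_distrib]
  rw [expect_const (powersetCard_nonempty.2 hk), expect_eq_sum_div_card, sum_boole, hdisj,
    card_powersetCard, card_powersetCard, card_sdiff_of_subset hA]

theorem choose_sub_div_choose_le_exp {N a k : ℕ} (ha : a ≤ N) (hk : k ≤ N) :
    ((N - a).choose k : ℝ) / N.choose k ≤ Real.exp (-(a * k / N)) := by
  rcases N.eq_zero_or_pos with rfl | hN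
  · obtain rfl : k = 0 := by omega
    simp
  have hN' : (0 : ℝ) < N := by exact_mod_cast hN
  have hle : ((N - a).choose k : ℝ) * N ^ k ≤ N.choose k * ((N : ℝ) - a) ^ k := by
    rw [← Nat.cast_sub ha]
    exact_mod_cast choose_mul_pow_le (N.sub_le a) k
  calc ((N - a).choose k : ℝ) / N.choose k
      ≤ (((N : ℝ) - a) / N) ^ k := by
        rw [div_le_iff₀ (by exact_mod_cast Nat.choose_pos hk), div_pow, div_mul_eq_mul_div,
          le_div_iff₀ (by positivity)]
        linarith
    _ ≤ Real.exp (-(a / N)) ^ k := by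
        gcongr
        · exact div_nonneg (sub_nonneg.2 (by exact_mod_cast ha)) hN'.le
        · rw [sub_div, div_self hN'.ne']
          exact Real.one_sub_le_exp_neg _
    _ = Real.exp (-(a * k / N)) := by
        rw [← Real.exp_nat_mul]
        ring_nf

end RandomSubset

section KeyRing

open Finset
open scoped BigOperators

variable {P K : ℕ}

instance : MeasurableSingletonClass (KeyRing P K) := ⟨fun _ => trivial⟩

theorem nonempty_keyRing (h : K ≤ P) : Nonempty (KeyRing P K) := by
  obtain ⟨s, -, hs⟩ := exists_subset_card_eq (s := (univ : Finset (Fin P))) (by simpa using h)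
  exact ⟨⟨s, hs⟩⟩

theorem expect_keyRing (f : Finset (Fin P) → ℝ) :
    𝔼 S : KeyRing P K, f S.1 = 𝔼 B ∈ (univ : Finset (Fin P)).powersetCard K, f B :=
  expect_bij (fun S _ => S.1) (fun S _ => by simp [S.2]) (fun _ _ => rfl)
    (fun _ _ _ _ => Subtype.ext) (fun B hB => ⟨⟨B, (mem_powersetCard.1 hB).2⟩, mem_univ _, rfl⟩)

/-- Two key rings have a key in common; for distinct nodes this is adjacency in the random key
graph. -/
abbrev SharesKey (A B : KeyRing P K) : Prop := (A.1 ∩ B.1).Nonempty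

theorem psf_eq (h : K ≤ P) : psf K P = 1 - ((P - K).choose K : ℝ) / P.choose K := by
  rw [psf]
  split_ifs with h2
  · rfl
  · rw [Nat.choose_eq_zero_of_lt (by omega)]
    simp

theorem expect_sharesKey (h : K ≤ P) (A : KeyRing P K) :
    𝔼 S : KeyRing P K, (if SharesKey A S then (1 : ℝ) else 0) = psf K P := by
  rw [expect_keyRing fun B => if (A.1 ∩ B).Nonempty then (1 : ℝ) else 0,
    expect_powersetCard_nonempty_inter (subset_univ _) (by simpa using h), psf_eq h, card_fin, A.2]

theorem psf_nonneg (h : K ≤ P) : 0 ≤ psf K P := by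
  obtain ⟨A⟩ := nonempty_keyRing h
  rw [← expect_sharesKey h A]
  exact expect_nonneg fun _ _ => by positivity

theorem psf_le_one (h : K ≤ P) : psf K P ≤ 1 := by
  rw [psf_eq h, sub_le_self_iff]
  positivity

theorem sq_div_mul_one_sub_psf_le (h : K ≤ P) : (K : ℝ) ^ 2 / P * (1 - psf K P) ≤ psf K P := by
  set a : ℝ := (K : ℝ) ^ 2 / P with ha
  have hexp : 1 - psf K P ≤ Real.exp (-a) := by
    rw [psf_eq h, sub_sub_cancel, ha, sq]
    exact choose_sub_div_choose_le_exp h h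
  have hmul : (a + 1) * (1 - psf K P) ≤ 1 :=
    calc (a + 1) * (1 - psf K P) ≤ Real.exp a * Real.exp (-a) := by
          gcongr
          · linarith [psf_le_one h]
          · exact Real.add_one_le_exp a
      _ = 1 := by rw [← Real.exp_add, add_neg_cancel, Real.exp_zero]
  linarith

theorem sq_div_le_two_mul_psf (h : K ≤ P) (hps : psf K P ≤ 1 / 2) :
    (K : ℝ) ^ 2 / P ≤ 2 * psf K P := by
  have := sq_div_mul_one_sub_psf_le h
  have : (0 : ℝ) ≤ (K : ℝ) ^ 2 / P := by positivity
  nlinarith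

theorem psf_pos (h : K ≤ P) (hK : 0 < K) : 0 < psf K P := by
  refine (psf_nonneg h).lt_of_ne fun h0 => ?_
  have hP : 0 < P := hK.trans_le h
  have : (0 : ℝ) < (K : ℝ) ^ 2 / P := by positivity
  have := sq_div_mul_one_sub_psf_le h
  rw [← h0] at this
  linarith

theorem expect_sharesKey_pow_le (h : K ≤ P) (A : KeyRing P K) {s : ℝ} (hs : 0 ≤ s) :
    𝔼 B : KeyRing P K, (if SharesKey A B then s ^ #(A.1 ∩ B.1) else 0) ≤
      Real.exp (s * ((K : ℝ) ^ 2 / P)) - 1 := by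
  rw [expect_keyRing fun B => if (A.1 ∩ B).Nonempty then s ^ #(A.1 ∩ B) else 0]
  have := expect_powersetCard_nonempty_inter_pow_le (U := univ) (by simpa using h) A.1 hs
  rwa [A.2, card_fin, ← sq] at this

/-- The conditional probability that two distinct nodes with key rings `A` and `B` are adjacent in
`𝔾_on`. -/
def linkProb (p : ℝ) (A B : KeyRing P K) : ℝ := if SharesKey A B then p else 0

theorem expect_linkProb (h : K ≤ P) (p : ℝ) (A : KeyRing P K) :
    𝔼 S : KeyRing P K, linkProb p A S = pef K P p := by
  rw [pef, ← expect_sharesKey h A, mul_expect]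
  simp [linkProb]

/-- The conditional probability that a further node is adjacent in `𝔾_on` to both of two nodes
with given key rings `A` and `B`. -/
def commonNbrProb (p : ℝ) (A B : KeyRing P K) : ℝ :=
  𝔼 S : KeyRing P K, linkProb p A S * linkProb p B S

theorem commonNbrProb_le (p : ℝ) (A B : KeyRing P K) :
    commonNbrProb p A B ≤ #(A.1 ∩ B.1) * (p ^ 2 * K / P) + (p * ((K : ℝ) ^ 2 / P)) ^ 2 := by
  have hmul : ∀ S : KeyRing P K, linkProb p A S * linkProb p B S =
      p ^ 2 * if SharesKey A S ∧ SharesKey B S then 1 else 0 := by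
    intro S
    by_cases hA : SharesKey A S <;> by_cases hB : SharesKey B S <;> simp [linkProb, hA, hB, sq]
  simp_rw [commonNbrProb, hmul, ← mul_expect]
  rw [expect_keyRing fun S => if (A.1 ∩ S).Nonempty ∧ (B.1 ∩ S).Nonempty then (1 : ℝ) else 0]
  refine (mul_le_mul_of_nonneg_left (expect_powersetCard_nonempty_inter_and_le A.1 B.1)
    (sq_nonneg p)).trans_eq ?_
  rw [A.2, B.2, card_fin]
  ring

variable {p : ℝ}

theorem pef_nonneg (h : K ≤ P) (h0 : 0 ≤ p) : 0 ≤ pef K P p := mul_nonneg h0 (psf_nonneg h)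

theorem linkProb_nonneg (h0 : 0 ≤ p) (A B : KeyRing P K) : 0 ≤ linkProb p A B := by
  unfold linkProb
  positivity

theorem linkProb_le_one (h1 : p ≤ 1) (A B : KeyRing P K) : linkProb p A B ≤ 1 := by
  unfold linkProb
  split_ifs
  exacts [h1, zero_le_one]

theorem commonNbrProb_nonneg (h0 : 0 ≤ p) (A B : KeyRing P K) : 0 ≤ commonNbrProb p A B :=
  expect_nonneg fun S _ => mul_nonneg (linkProb_nonneg h0 A S) (linkProb_nonneg h0 B S)

theorem commonNbrProb_le_pef (h : K ≤ P) (h0 : 0 ≤ p) (h1 : p ≤ 1) (A B : KeyRing P K) :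
    commonNbrProb p A B ≤ pef K P p := by
  rw [← expect_linkProb h p A]
  exact expect_le_expect fun S _ =>
    mul_le_of_le_one_right (linkProb_nonneg h0 A S) (linkProb_le_one h1 B S)

theorem commonNbrProb_le_add_sq_pef (h : K ≤ P) (h0 : 0 ≤ p) (hps : psf K P ≤ 1 / 2)
    (A B : KeyRing P K) :
    commonNbrProb p A B ≤ #(A.1 ∩ B.1) * (p ^ 2 * K / P) + 4 * pef K P p ^ 2 := by
  refine (commonNbrProb_le p A B).trans (add_le_add_right ?_ _)
  calc (p * ((K : ℝ) ^ 2 / P)) ^ 2 ≤ (p * (2 * psf K P)) ^ 2 := by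
        gcongr
        exact sq_div_le_two_mul_psf h hps
    _ = 4 * pef K P p ^ 2 := by rw [pef]; ring

end KeyRing

section PairDegree

open Finset
open scoped BigOperators Nat

/-- The probability that a Poisson variable of mean `μ` equals `ℓ`. Unlike in
`ProbabilityTheory.poissonPMFReal`, the mean is a real number. -/
def poissonWeight (μ : ℝ) (ℓ : ℕ) : ℝ := Real.exp (-μ) * (μ ^ ℓ / ℓ !)

theorem poissonWeight_pos {μ : ℝ} (hμ : 0 < μ) (ℓ : ℕ) : 0 < poissonWeight μ ℓ := by
  unfold poissonWeight
  positivity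

theorem poissonWeight_sq (μ : ℝ) (ℓ : ℕ) :
    poissonWeight μ ℓ ^ 2 = 1 / (ℓ ! : ℝ) ^ 2 * μ ^ (2 * ℓ) * Real.exp (-2 * μ) := by
  rw [poissonWeight, mul_pow, ← Real.exp_nat_mul]
  push_cast
  ring_nf

variable {V : Type*} [DecidableEq V] {W : Finset V} {ℓ : ℕ} {e q : ℝ}

/-- The probability that each of two given nodes has exactly `ℓ` neighbours in `W`, when every node
of `W`, independently of the others, is adjacent to either one with probability `e` and to both
with probability `q`. The summation variables are the two neighbourhoods. -/
def pairDegProb (W : Finset V) (ℓ : ℕ) (e q : ℝ) : ℝ :=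
  ∑ X ∈ W.powersetCard ℓ, ∑ Y ∈ W.powersetCard ℓ,
    q ^ #(X ∩ Y) * (e - q) ^ #(X \ Y) * (e - q) ^ #(Y \ X) * (1 - 2 * e + q) ^ #(W \ (X ∪ Y))

theorem pairDegProb_nonneg (hq0 : 0 ≤ q) (hqe : q ≤ e) (he : 2 * e ≤ 1) :
    0 ≤ pairDegProb W ℓ e q := by
  have : 0 ≤ e - q := sub_nonneg.2 hqe
  have : 0 ≤ 1 - 2 * e + q := by linarith
  unfold pairDegProb
  positivity

theorem card_sub_le_card_sdiff_union {X Y : Finset V} (hX : #X = ℓ) (hY : #Y = ℓ) :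
    (#W : ℝ) - 2 * ℓ ≤ #(W \ (X ∪ Y)) := by
  have h₁ := le_card_sdiff (X ∪ Y) W
  have h₂ := card_union_le X Y
  have h₃ : #W ≤ #(W \ (X ∪ Y)) + 2 * ℓ := by omega
  rw [sub_le_iff_le_add]
  exact_mod_cast h₃

theorem pow_card_sdiff_union_le (hq0 : 0 ≤ q) (hqe : q ≤ e) (he : 2 * e ≤ 1) {X Y : Finset V}
    (hX : #X = ℓ) (hY : #Y = ℓ) :
    (1 - 2 * e + q) ^ #(W \ (X ∪ Y)) ≤ Real.exp (-(2 * (#W * e)) + (q * #W + 4 * ℓ * e)) := by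
  calc (1 - 2 * e + q) ^ #(W \ (X ∪ Y)) ≤ Real.exp (-(2 * e - q)) ^ #(W \ (X ∪ Y)) := by
        refine pow_le_pow_left₀ (by linarith) ?_ _
        linarith [Real.add_one_le_exp (-(2 * e - q))]
    _ = Real.exp (-((2 * e - q) * #(W \ (X ∪ Y)))) := by
        rw [← Real.exp_nat_mul]
        ring_nf
    _ ≤ Real.exp (-((2 * e - q) * (#W - 2 * ℓ))) := by
        gcongr
        · linarith
        · exact card_sub_le_card_sdiff_union hX hY
    _ ≤ Real.exp (-(2 * (#W * e)) + (q * #W + 4 * ℓ * e)) := by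
        gcongr
        have : 0 ≤ q * ℓ := by positivity
        linarith

theorem pow_inter_mul_pow_sdiff_le (hq0 : 0 ≤ q) (hqe : q ≤ e) (he : 0 < e) {X Y : Finset V}
    (hX : #X = ℓ) (hY : #Y = ℓ) :
    q ^ #(X ∩ Y) * (e - q) ^ #(X \ Y) * (e - q) ^ #(Y \ X) ≤
      (e ^ ℓ) ^ 2 * (q / e ^ 2) ^ #(X ∩ Y) := by
  have hX' : #(X ∩ Y) + #(X \ Y) = ℓ := by rw [card_inter_add_card_sdiff, hX]
  have hY' : #(X ∩ Y) + #(Y \ X) = ℓ := by rw [inter_comm, card_inter_add_card_sdiff, hY]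
  have heq : e - q ≤ e := by linarith
  calc q ^ #(X ∩ Y) * (e - q) ^ #(X \ Y) * (e - q) ^ #(Y \ X)
      ≤ q ^ #(X ∩ Y) * e ^ #(X \ Y) * e ^ #(Y \ X) := by
        gcongr
    _ = (e ^ #(X ∩ Y) * e ^ #(X \ Y)) * (e ^ #(X ∩ Y) * e ^ #(Y \ X)) *
          (q / e ^ 2) ^ #(X ∩ Y) := by
        rw [div_pow, pow_right_comm]
        field_simp
    _ = (e ^ ℓ) ^ 2 * (q / e ^ 2) ^ #(X ∩ Y) := by
        rw [← pow_add, ← pow_add, hX', hY', ← sq (e ^ ℓ)]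

theorem choose_mul_pow_le_pow_div_factorial (N ℓ : ℕ) (he : 0 ≤ e) :
    N.choose ℓ * e ^ ℓ ≤ (N * e) ^ ℓ / ℓ ! := by
  rw [mul_pow, mul_div_right_comm]
  gcongr
  exact Nat.choose_le_pow_div ℓ N

theorem sum_powersetCard_pow_card_inter_le {X : Finset V} (hX : #X = ℓ) {t : ℝ} (ht : 0 ≤ t) :
    ∑ Y ∈ W.powersetCard ℓ, t ^ #(X ∩ Y) ≤ (#W).choose ℓ * Real.exp (t * (ℓ ^ 2 / #W)) := by
  calc ∑ Y ∈ W.powersetCard ℓ, t ^ #(X ∩ Y)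
      ≤ ∑ Y ∈ W.powersetCard ℓ, (1 + t) ^ #(X ∩ Y) := by
        gcongr
        linarith
    _ = (#W).choose ℓ * 𝔼 Y ∈ W.powersetCard ℓ, (1 + t) ^ #(X ∩ Y) := by
        rw [← card_powersetCard, card_mul_expect]
    _ ≤ (#W).choose ℓ * Real.exp (t * (ℓ ^ 2 / #W)) := by
        have := expect_powersetCard_pow_card_inter_le (U := W) (k := ℓ) X ht
        rw [hX, ← sq] at this
        gcongr

theorem pairDegProb_le (hq0 : 0 ≤ q) (hqe : q ≤ e) (he0 : 0 < e) (he : 2 * e ≤ 1) :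
    pairDegProb W ℓ e q ≤ poissonWeight (#W * e) ℓ ^ 2 *
      Real.exp (q * #W + 4 * ℓ * e + q / e ^ 2 * (ℓ ^ 2 / #W)) := by
  set E := Real.exp (-(2 * (#W * e)) + (q * #W + 4 * ℓ * e)) with hE
  set F := Real.exp (q / e ^ 2 * (ℓ ^ 2 / #W)) with hF
  calc pairDegProb W ℓ e q
      ≤ ∑ X ∈ W.powersetCard ℓ, ∑ Y ∈ W.powersetCard ℓ,
          (e ^ ℓ) ^ 2 * (q / e ^ 2) ^ #(X ∩ Y) * E := by
        refine sum_le_sum fun X hX => sum_le_sum fun Y hY => ?_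
        have hX := (mem_powersetCard.1 hX).2
        have hY := (mem_powersetCard.1 hY).2
        exact mul_le_mul (pow_inter_mul_pow_sdiff_le hq0 hqe he0 hX hY)
          (pow_card_sdiff_union_le hq0 hqe he hX hY) (pow_nonneg (by linarith) _) (by positivity)
    _ = ∑ X ∈ W.powersetCard ℓ,
          (e ^ ℓ) ^ 2 * (∑ Y ∈ W.powersetCard ℓ, (q / e ^ 2) ^ #(X ∩ Y)) * E := by
        simp_rw [mul_sum, sum_mul]
    _ ≤ ∑ X ∈ W.powersetCard ℓ, (e ^ ℓ) ^ 2 * ((#W).choose ℓ * F) * E := by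
        gcongr with X hX
        exact sum_powersetCard_pow_card_inter_le (mem_powersetCard.1 hX).2 (by positivity)
    _ = ((#W).choose ℓ * e ^ ℓ) ^ 2 * (E * F) := by
        rw [sum_const, card_powersetCard, nsmul_eq_mul]
        ring
    _ ≤ ((#W * e) ^ ℓ / ℓ !) ^ 2 * (E * F) := by
        gcongr
        exact choose_mul_pow_le_pow_div_factorial _ _ he0.le
    _ = _ := by
        rw [poissonWeight, mul_pow (Real.exp _), ← Real.exp_nat_mul, hE, hF, ← Real.exp_add,
          mul_comm (Real.exp _), mul_assoc (_ ^ 2), ← Real.exp_add]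
        push_cast
        ring_nf

theorem one_sub_le_pow_mul_exp (he0 : 0 ≤ e) (he : 2 * e ≤ 1) (N : ℕ) :
    1 - 4 * N * e ^ 2 ≤ (1 - 2 * e) ^ N * Real.exp (2 * (N * e)) := by
  have : 0 ≤ 1 - 2 * e := by linarith
  calc 1 - 4 * N * e ^ 2 = 1 + N * (-(4 * e ^ 2)) := by ring
    _ ≤ (1 + -(4 * e ^ 2)) ^ N := one_add_mul_le_pow (by nlinarith) N
    _ = (1 - 2 * e) ^ N * (2 * e + 1) ^ N := by rw [← mul_pow]; ring
    _ ≤ (1 - 2 * e) ^ N * Real.exp (2 * e) ^ N := by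
        gcongr
        exact Real.add_one_le_exp _
    _ = (1 - 2 * e) ^ N * Real.exp (2 * (N * e)) := by
        rw [← Real.exp_nat_mul]
        ring_nf

theorem sub_pow_div_factorial_le_choose {N : ℕ} (hN : 2 * ℓ ≤ N) {M : ℕ} (hM : N - ℓ ≤ M) :
    ((N : ℝ) - 2 * ℓ) ^ ℓ / ℓ ! ≤ M.choose ℓ := by
  have hcast : (N : ℝ) - 2 * ℓ = ((N - 2 * ℓ : ℕ) : ℝ) := by push_cast [hN]; ring
  rw [hcast]
  refine le_trans ?_ (Nat.pow_le_choose ℓ M)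
  gcongr ?_ ^ ℓ / _
  exact_mod_cast (by omega : N - 2 * ℓ ≤ M + 1 - ℓ)

/-- Pairs of disjoint neighbourhoods already carry the main term. -/
theorem choose_mul_choose_le_pairDegProb (hq0 : 0 ≤ q) (hqe : q ≤ e) (he : 2 * e ≤ 1) :
    (#W).choose ℓ * (#W - ℓ).choose ℓ * ((e - q) ^ ℓ) ^ 2 * (1 - 2 * e) ^ #W ≤
      pairDegProb W ℓ e q := by
  have : 0 ≤ e - q := sub_nonneg.2 hqe
  have hbase : 0 ≤ 1 - 2 * e := by linarith
  have : 0 ≤ 1 - 2 * e + q := by linarith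
  calc (#W).choose ℓ * (#W - ℓ).choose ℓ * ((e - q) ^ ℓ) ^ 2 * (1 - 2 * e) ^ #W
      = ∑ X ∈ W.powersetCard ℓ, ∑ Y ∈ (W \ X).powersetCard ℓ,
          ((e - q) ^ ℓ) ^ 2 * (1 - 2 * e) ^ #W := by
        have hcard : ∀ X ∈ W.powersetCard ℓ, #((W \ X).powersetCard ℓ) = (#W - ℓ).choose ℓ := by
          intro X hX
          obtain ⟨hXW, hX⟩ := mem_powersetCard.1 hX
          rw [card_powersetCard, card_sdiff_of_subset hXW, hX]
        rw [sum_congr rfl fun X hX => by rw [sum_const, hcard X hX], sum_const, card_powersetCard,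
          nsmul_eq_mul, nsmul_eq_mul]
        ring
    _ ≤ ∑ X ∈ W.powersetCard ℓ, ∑ Y ∈ (W \ X).powersetCard ℓ,
          q ^ #(X ∩ Y) * (e - q) ^ #(X \ Y) * (e - q) ^ #(Y \ X) *
            (1 - 2 * e + q) ^ #(W \ (X ∪ Y)) := by
        refine sum_le_sum fun X hX => sum_le_sum fun Y hY => ?_
        rw [mem_powersetCard, subset_sdiff] at hY
        have hXY : Disjoint X Y := hY.1.2.symm
        rw [disjoint_iff_inter_eq_empty.1 hXY, sdiff_eq_self_of_disjoint hXY,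
          sdiff_eq_self_of_disjoint hXY.symm, hY.2, (mem_powersetCard.1 hX).2, card_empty, pow_zero,
          one_mul, ← sq]
        gcongr ((e - q) ^ ℓ) ^ 2 * ?_
        calc (1 - 2 * e) ^ #W ≤ (1 - 2 * e) ^ #(W \ (X ∪ Y)) :=
              pow_le_pow_of_le_one hbase (by linarith) (card_le_card sdiff_subset)
          _ ≤ (1 - 2 * e + q) ^ #(W \ (X ∪ Y)) := by
              gcongr
              linarith
    _ ≤ pairDegProb W ℓ e q := by
        refine sum_le_sum fun X _ => ?_
        exact sum_le_sum_of_subset_of_nonneg (powersetCard_mono sdiff_subset)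
          fun Y _ _ => by positivity

theorem le_pairDegProb (hq0 : 0 ≤ q) (hqe : q ≤ e) (he0 : 0 < e) (he : 2 * e ≤ 1)
    (hℓ : 2 * ℓ ≤ #W) (hW : 0 < #W) :
    poissonWeight (#W * e) ℓ ^ 2 *
        (((1 - 2 * ℓ / #W) * (1 - q / e)) ^ (2 * ℓ) * (1 - 4 * #W * e ^ 2)) ≤
      pairDegProb W ℓ e q := by
  set D : ℝ := ((#W : ℝ) - 2 * ℓ) ^ ℓ / ℓ ! with hD
  have hNℓ : (0 : ℝ) ≤ (#W : ℝ) - 2 * ℓ := sub_nonneg.2 (by exact_mod_cast hℓ)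
  have hD0 : 0 ≤ D := by positivity
  calc poissonWeight (#W * e) ℓ ^ 2 *
        (((1 - 2 * ℓ / #W) * (1 - q / e)) ^ (2 * ℓ) * (1 - 4 * #W * e ^ 2))
      = D * D * ((e - q) ^ ℓ) ^ 2 * (Real.exp (-(2 * (#W * e))) * (1 - 4 * #W * e ^ 2)) := by
        have hW' : (#W : ℝ) ≠ 0 := by exact_mod_cast hW.ne'
        rw [poissonWeight_sq, hD, one_sub_div hW', one_sub_div he0.ne', pow_mul', pow_mul']
        simp only [mul_pow, div_pow]
        field_simp
    _ ≤ D * D * ((e - q) ^ ℓ) ^ 2 *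
          (Real.exp (-(2 * (#W * e))) * ((1 - 2 * e) ^ #W * Real.exp (2 * (#W * e)))) := by
        gcongr
        exact one_sub_le_pow_mul_exp he0.le he _
    _ = D * D * ((e - q) ^ ℓ) ^ 2 * (1 - 2 * e) ^ #W := by
        rw [mul_left_comm (Real.exp _), ← Real.exp_add, neg_add_cancel, Real.exp_zero, mul_one]
    _ ≤ (#W).choose ℓ * (#W - ℓ).choose ℓ * ((e - q) ^ ℓ) ^ 2 * (1 - 2 * e) ^ #W := by
        have : 0 ≤ 1 - 2 * e := by linarith
        gcongr
        · exact sub_pow_div_factorial_le_choose hℓ (Nat.sub_le _ _)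
        · exact sub_pow_div_factorial_le_choose hℓ le_rfl
    _ ≤ pairDegProb W ℓ e q := choose_mul_choose_le_pairDegProb hq0 hqe he

end PairDegree

section ProductSpace

open Finset
open scoped BigOperators

theorem measureReal_pi_setOf_forall_mem_of_injective {ι J β : Type*} [Fintype ι] [Fintype J]
    [MeasurableSpace β] (μ : Measure β) [IsProbabilityMeasure μ] {i : J → ι}
    (hi : Function.Injective i) (T : J → Set β) :
    (Measure.pi fun _ : ι => μ).real {c | ∀ j, c (i j) ∈ T j} = ∏ j, μ.real (T j) := by
  have hset : {c : ι → β | ∀ j, c (i j) ∈ T j} =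
      Set.univ.pi (Function.extend i T fun _ => Set.univ) := by
    ext c
    simp only [Set.mem_ofPred_eq, Set.mem_univ_pi]
    refine ⟨fun h e => ?_, fun h j => by simpa [hi.extend_apply] using h (i j)⟩
    by_cases he : ∃ j, i j = e
    · obtain ⟨j, rfl⟩ := he
      simpa [hi.extend_apply] using h j
    · simp [Function.extend_apply' _ _ _ he]
  rw [hset, measureReal_def, Measure.pi_pi, ENNReal.toReal_prod]
  refine (Fintype.prod_of_injective i hi _ _ (fun e he => ?_) fun j => ?_).symm
  · simp [Function.extend_apply' _ _ _ he]
  · rw [hi.extend_apply, measureReal_def]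

variable {V κ : Type*} [Fintype V] [DecidableEq V] [Fintype κ] [Nonempty κ]

theorem expect_pi_update (x : V) (f : (V → κ) → ℝ) :
    𝔼 S, f S = 𝔼 A : κ, 𝔼 S, f (Function.update S x A) := by
  have hswap : Function.Involutive fun a : κ × (V → κ) => (a.2 x, Function.update a.2 x a.1) :=
    fun a => by simp
  calc 𝔼 S, f S = 𝔼 a : κ × (V → κ), f a.2 := by
        simp only [← univ_product_univ, expect_product, Fintype.expect_const]
    _ = 𝔼 a : κ × (V → κ), f (Function.update a.2 x a.1) :=
        Fintype.expect_equiv hswap.toPerm _ _ fun a => by simp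
    _ = 𝔼 A : κ, 𝔼 S, f (Function.update S x A) := by
        rw [← univ_product_univ, expect_product]

theorem expect_pi_prod (W : Finset V) (ψ : V → κ → ℝ) :
    𝔼 S : V → κ, ∏ z ∈ W, ψ z (S z) = ∏ z ∈ W, 𝔼 s, ψ z s := by
  have hW : ∏ z ∈ W, 𝔼 s, ψ z s = ∏ z, 𝔼 s, if z ∈ W then ψ z s else 1 := by
    rw [← prod_subset (subset_univ W) fun z _ hz => by simp [hz]]
    exact prod_congr rfl fun z hz => by simp [hz]
  rw [hW]
  simp_rw [Fintype.expect_eq_sum_div_card, prod_div_distrib, prod_const, card_univ,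
    Fintype.card_fun, prod_univ_sum, Fintype.piFinset_univ, prod_ite_mem, univ_inter, Nat.cast_pow]

theorem expect_pi_mul_prod {x y : V} (hxy : x ≠ y) {W : Finset V} (hx : x ∉ W) (hy : y ∉ W)
    (g : κ → κ → ℝ) (ψ : κ → κ → V → κ → ℝ) :
    𝔼 S : V → κ, g (S x) (S y) * ∏ z ∈ W, ψ (S x) (S y) z (S z) =
      𝔼 A, 𝔼 B, g A B * ∏ z ∈ W, 𝔼 s, ψ A B z s := by
  rw [expect_pi_update x]
  refine expect_congr rfl fun A _ => ?_
  rw [expect_pi_update y]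
  refine expect_congr rfl fun B _ => ?_
  rw [← expect_pi_prod, mul_expect]
  refine expect_congr rfl fun S _ => ?_
  rw [Function.update_self, Function.update_of_ne hxy.symm, Function.update_self]
  congr 1
  refine prod_congr rfl fun z hz => ?_
  rw [Function.update_of_ne (ne_of_mem_of_not_mem hz hx),
    Function.update_of_ne (ne_of_mem_of_not_mem hz hy)]

end ProductSpace

section Gon

open Finset
open scoped BigOperators

variable {n K P : ℕ} {p : ℝ}

theorem isProbabilityMeasure_uniformKeyMeasure (h : K ≤ P) :
    IsProbabilityMeasure (uniformKeyMeasure P K) := by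
  have := nonempty_keyRing h
  constructor
  rw [uniformKeyMeasure, Measure.smul_apply, Measure.count_univ, smul_eq_mul,
    ENat.card_eq_coe_fintype_card]
  exact ENNReal.inv_mul_cancel (by exact_mod_cast Fintype.card_ne_zero) (by simp)

theorem isProbabilityMeasure_bern (h0 : 0 ≤ p) (h1 : p ≤ 1) : IsProbabilityMeasure (bern p) := by
  constructor
  simp only [bern, Measure.add_apply, Measure.smul_apply, measure_univ, smul_eq_mul, mul_one]
  rw [← ENNReal.ofReal_add h0 (by linarith)]
  simp

theorem isProbabilityMeasure_gonMeasure (h : K ≤ P) (h0 : 0 ≤ p) (h1 : p ≤ 1) :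
    IsProbabilityMeasure (gonMeasure n K P p) := by
  have := isProbabilityMeasure_uniformKeyMeasure h
  have := isProbabilityMeasure_bern h0 h1
  unfold gonMeasure
  infer_instance

theorem gonMeasure_real_eq_expect (h : K ≤ P) (h0 : 0 ≤ p) (h1 : p ≤ 1)
    (E : Set (GonSpace n K P)) :
    (gonMeasure n K P p).real E =
      𝔼 S : Fin n → KeyRing P K, (Measure.pi fun _ => bern p).real {c | (S, c) ∈ E} := by
  have := isProbabilityMeasure_uniformKeyMeasure h
  have := isProbabilityMeasure_bern h0 h1
  rw [measureReal_def, gonMeasure, Measure.prod_apply E.toFinite.measurableSet, lintegral_fintype,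
    ENNReal.toReal_sum fun S _ => by finiteness, Fintype.expect_eq_sum_div_card, sum_div]
  refine sum_congr rfl fun S _ => ?_
  rw [ENNReal.toReal_mul, Measure.pi_singleton]
  simp [uniformKeyMeasure, measureReal_def, div_eq_mul_inv, Set.preimage]

theorem bern_real_setOf_and_iff (h0 : 0 ≤ p) (h1 : p ≤ 1) (a m : Prop) [Decidable a]
    [Decidable m] :
    (bern p).real {b | a ∧ b = true ↔ m} =
      if m then (if a then p else 0) else 1 - if a then p else 0 := by
  by_cases ha : a <;> by_cases hm : m <;>
    simp [ha, hm, bern, measureReal_def, h0, h1, ← ENNReal.ofReal_add]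

end Gon

section JointDegree

open Finset
open scoped BigOperators

variable {V : Type*} [Fintype V] [DecidableEq V]

/-- The vertices other than `x` and `y`. -/
def others (x y : V) : Finset V := {x, y}ᶜ

theorem mem_others {x y z : V} : z ∈ others x y ↔ z ≠ x ∧ z ≠ y := by simp [others]

theorem others_comm (x y : V) : others x y = others y x := by rw [others, others, pair_comm]

theorem card_others {x y : V} (hxy : x ≠ y) : #(others x y) = Fintype.card V - 2 := by
  rw [others, card_compl, card_pair hxy]

theorem gDeg_eq_iff_exists_nbhd {G : SimpleGraph V} {x y : V} (hxy : ¬ G.Adj x y) (ℓ : ℕ) :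
    gDeg G x = ℓ ↔ ∃ X ∈ (others x y).powersetCard ℓ, ∀ z ∈ others x y, G.Adj x z ↔ z ∈ X := by
  classical
  have hdeg : gDeg G x = #(G.neighborFinset x) := by
    rw [gDeg, Nat.card_eq_fintype_card, G.card_neighborFinset_eq_degree]
    exact G.card_neighborSet_eq_degree x
  have hsub : G.neighborFinset x ⊆ others x y := by
    intro z hz
    rw [SimpleGraph.mem_neighborFinset] at hz
    exact mem_others.2 ⟨hz.ne', fun h => hxy (h ▸ hz)⟩
  rw [hdeg]
  constructor
  · exact fun h => ⟨_, mem_powersetCard.2 ⟨hsub, h⟩, by simp⟩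
  · rintro ⟨X, hX, h⟩
    obtain ⟨hXW, rfl⟩ := mem_powersetCard.1 hX
    congr 1
    ext z
    by_cases hz : z ∈ others x y
    · rw [SimpleGraph.mem_neighborFinset, h z hz]
    · exact iff_of_false (fun h => hz (hsub h)) fun h => hz (hXW h)

/-- The edges between a node of `{x, y}` and any other node. The edge `{x, y}` is indexed by `none`;
the Boolean selects the endpoint `x` or `y`. -/
def incidentEdge (x y : V) : Option (others x y × Bool) → Sym2 V
  | none => s(x, y)
  | some (z, true) => s(x, z)
  | some (z, false) => s(y, z)

theorem incidentEdge_injective {x y : V} (hxy : x ≠ y) :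
    Function.Injective (incidentEdge x y) := by
  rintro (_ | ⟨⟨z, hz⟩, (_ | _)⟩) (_ | ⟨⟨w, hw⟩, (_ | _)⟩) h <;>
    simp only [incidentEdge, Sym2.eq_iff] at h <;> grind [mem_others]

variable {n K P : ℕ} {p : ℝ}

/-- The event `D_{x,ℓ} ∩ D_{y,ℓ} ∩ (E_{xy})ᶜ`: the nodes `x` and `y` are not adjacent and both have
degree `ℓ`. -/
abbrev jointDegEvent (n K P x y ℓ : ℕ) : Set (GonSpace n K P) :=
  degEvent n K P x ℓ ∩ degEvent n K P y ℓ ∩ (edgeEvent n K P x y)ᶜ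

/-- The event that the nodes `x` and `y` are not adjacent and have neighbourhoods `X` and `Y` among
the other nodes. -/
def nbhdEvent (x y : Fin n) (X Y : Finset (Fin n)) : Set (GonSpace n K P) :=
  {ω | ¬ (gonGraph ω).Adj x y ∧ ∀ z ∈ others x y,
    ((gonGraph ω).Adj x z ↔ z ∈ X) ∧ ((gonGraph ω).Adj y z ↔ z ∈ Y)}

theorem jointDegEvent_eq_biUnion_nbhdEvent (x y : Fin n) (ℓ : ℕ) :
    jointDegEvent n K P x y ℓ =
      ⋃ XY ∈ (others x y).powersetCard ℓ ×ˢ (others x y).powersetCard ℓ,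
        nbhdEvent x y XY.1 XY.2 := by
  ext ω
  have hx : ω ∈ degEvent n K P x ℓ ↔ gDeg (gonGraph ω) x = ℓ := by simp [degEvent]
  have hy : ω ∈ degEvent n K P y ℓ ↔ gDeg (gonGraph ω) y = ℓ := by simp [degEvent]
  have hadj : ω ∈ edgeEvent n K P x y ↔ (gonGraph ω).Adj x y := by simp [edgeEvent]
  simp only [Set.mem_inter_iff, Set.mem_compl_iff, hx, hy, hadj, Set.mem_iUnion, mem_product,
    exists_prop, Prod.exists, nbhdEvent, Set.mem_ofPred_eq]
  by_cases h : (gonGraph ω).Adj x y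
  · simp [h]
  · have h' : ¬ (gonGraph ω).Adj y x := fun h' => h h'.symm
    rw [gDeg_eq_iff_exists_nbhd h, gDeg_eq_iff_exists_nbhd h', others_comm y x]
    simp only [h, not_false_eq_true, and_true, true_and]
    constructor
    · rintro ⟨⟨X, hX, hXz⟩, Y, hY, hYz⟩
      exact ⟨X, Y, ⟨hX, hY⟩, fun z hz => ⟨hXz z hz, hYz z hz⟩⟩
    · rintro ⟨X, Y, ⟨hX, hY⟩, hz⟩
      exact ⟨⟨X, hX, fun z h => (hz z h).1⟩, Y, hY, fun z h => (hz z h).2⟩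

theorem eq_of_mem_nbhdEvent {x y : Fin n} {ω : GonSpace n K P} {X Y X' Y' : Finset (Fin n)}
    (hX : X ⊆ others x y) (hY : Y ⊆ others x y) (hX' : X' ⊆ others x y) (hY' : Y' ⊆ others x y)
    (h : ω ∈ nbhdEvent x y X Y) (h' : ω ∈ nbhdEvent x y X' Y') : X = X' ∧ Y = Y' := by
  have hXX' : ∀ z ∈ others x y, z ∈ X ↔ z ∈ X' := fun z hz =>
    (h.2 z hz).1.symm.trans (h'.2 z hz).1
  have hYY' : ∀ z ∈ others x y, z ∈ Y ↔ z ∈ Y' := fun z hz =>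
    (h.2 z hz).2.symm.trans (h'.2 z hz).2
  exact ⟨Subset.antisymm (fun z hz => (hXX' z (hX hz)).1 hz) fun z hz => (hXX' z (hX' hz)).2 hz,
    Subset.antisymm (fun z hz => (hYY' z (hY hz)).1 hz) fun z hz => (hYY' z (hY' hz)).2 hz⟩

theorem pairwiseDisjoint_nbhdEvent (x y : Fin n) :
    {XY : Finset (Fin n) × Finset (Fin n) | XY.1 ⊆ others x y ∧ XY.2 ⊆ others x y}.PairwiseDisjoint
      fun XY => (nbhdEvent x y XY.1 XY.2 : Set (GonSpace n K P)) := by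
  rintro ⟨X, Y⟩ ⟨hX, hY⟩ ⟨X', Y'⟩ ⟨hX', hY'⟩ hne
  refine Set.disjoint_left.2 fun ω h h' => hne ?_
  obtain ⟨rfl, rfl⟩ := eq_of_mem_nbhdEvent hX hY hX' hY' h h'
  rfl

theorem measureReal_setOf_mem_nbhdEvent (h0 : 0 ≤ p) (h1 : p ≤ 1) {x y : Fin n} (hxy : x ≠ y)
    (X Y : Finset (Fin n)) (S : Fin n → KeyRing P K) :
    (Measure.pi fun _ => bern p).real {c | (S, c) ∈ nbhdEvent x y X Y} =
      (1 - linkProb p (S x) (S y)) * ∏ z ∈ others x y,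
        (if z ∈ X then linkProb p (S x) (S z) else 1 - linkProb p (S x) (S z)) *
          (if z ∈ Y then linkProb p (S y) (S z) else 1 - linkProb p (S y) (S z)) := by
  have := isProbabilityMeasure_bern h0 h1
  let T : Option (others x y × Bool) → Set Bool
    | none => {b | SharesKey (S x) (S y) ∧ b = true ↔ False}
    | some (z, true) => {b | SharesKey (S x) (S z) ∧ b = true ↔ z.1 ∈ X}
    | some (z, false) => {b | SharesKey (S y) (S z) ∧ b = true ↔ z.1 ∈ Y}
  have hT : {c | (S, c) ∈ nbhdEvent x y X Y} = {c | ∀ j, c (incidentEdge x y j) ∈ T j} := by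
    ext c
    have hx : ∀ z ∈ others x y, x ≠ z := fun z hz => (mem_others.1 hz).1.symm
    have hy : ∀ z ∈ others x y, y ≠ z := fun z hz => (mem_others.1 hz).2.symm
    simp only [nbhdEvent, gonGraph, Set.mem_ofPred_eq, Option.forall, Prod.forall, Bool.forall_bool,
      incidentEdge, T, Subtype.forall, ne_eq, hxy, not_false_eq_true, true_and, iff_false]
    refine and_congr_right fun _ => forall₂_congr fun z hz => ?_
    simp [hx z hz, hy z hz, and_comm]
  rw [hT, measureReal_pi_setOf_forall_mem_of_injective _ (incidentEdge_injective hxy),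
    Fintype.prod_option, Fintype.prod_prod_type, ← prod_coe_sort (others x y)]
  simp only [T, Fintype.prod_bool, bern_real_setOf_and_iff h0 h1, if_false, linkProb]

theorem expect_ite_linkProb_mul_ite_linkProb (h : K ≤ P) (A B : KeyRing P K) (a b : Prop)
    [Decidable a] [Decidable b] :
    𝔼 S : KeyRing P K, (if a then linkProb p A S else 1 - linkProb p A S) *
        (if b then linkProb p B S else 1 - linkProb p B S) =
      if a then if b then commonNbrProb p A B else pef K P p - commonNbrProb p A B
      else if b then pef K P p - commonNbrProb p A B
        else 1 - 2 * pef K P p + commonNbrProb p A B := by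
  have := nonempty_keyRing h
  have hA := expect_linkProb h p A
  have hB := expect_linkProb h p B
  split_ifs <;>
    simp only [mul_sub, sub_mul, mul_one, one_mul, expect_sub_distrib, hA, hB,
      Fintype.expect_const, ← commonNbrProb.eq_1]
  ring

theorem prod_ite_mem_ite_mem {V : Type*} [DecidableEq V] {W X Y : Finset V} (hX : X ⊆ W)
    (hY : Y ⊆ W) (a b c d : ℝ) :
    ∏ z ∈ W, (if z ∈ X then if z ∈ Y then a else b else if z ∈ Y then c else d) =
      a ^ #(X ∩ Y) * b ^ #(X \ Y) * c ^ #(Y \ X) * d ^ #(W \ (X ∪ Y)) := by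
  have h₁ : {z ∈ W | z ∈ X ∧ z ∈ Y} = X ∩ Y := by grind
  have h₂ : {z ∈ W | z ∈ X ∧ z ∉ Y} = X \ Y := by grind
  have h₃ : {z ∈ W | z ∉ X ∧ z ∈ Y} = Y \ X := by grind
  have h₄ : {z ∈ W | z ∉ X ∧ z ∉ Y} = W \ (X ∪ Y) := by grind
  simp only [prod_ite, filter_filter, prod_const, h₁, h₂, h₃, h₄, mul_assoc]

theorem measureReal_nbhdEvent (h : K ≤ P) (h0 : 0 ≤ p) (h1 : p ≤ 1) {x y : Fin n} (hxy : x ≠ y)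
    {X Y : Finset (Fin n)} (hX : X ⊆ others x y) (hY : Y ⊆ others x y) :
    (gonMeasure n K P p).real (nbhdEvent x y X Y) =
      𝔼 A : KeyRing P K, 𝔼 B : KeyRing P K, (1 - linkProb p A B) *
        (commonNbrProb p A B ^ #(X ∩ Y) * (pef K P p - commonNbrProb p A B) ^ #(X \ Y) *
          (pef K P p - commonNbrProb p A B) ^ #(Y \ X) *
          (1 - 2 * pef K P p + commonNbrProb p A B) ^ #(others x y \ (X ∪ Y))) := by
  have := nonempty_keyRing h
  simp_rw [gonMeasure_real_eq_expect h h0 h1, measureReal_setOf_mem_nbhdEvent h0 h1 hxy]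
  rw [expect_pi_mul_prod hxy (by simp [mem_others]) (by simp [mem_others])
    (fun A B => 1 - linkProb p A B) fun A B z s =>
      (if z ∈ X then linkProb p A s else 1 - linkProb p A s) *
        (if z ∈ Y then linkProb p B s else 1 - linkProb p B s)]
  simp_rw [expect_ite_linkProb_mul_ite_linkProb h, prod_ite_mem_ite_mem hX hY]

theorem measureReal_jointDegEvent (h : K ≤ P) (h0 : 0 ≤ p) (h1 : p ≤ 1) {x y : Fin n}
    (hxy : x ≠ y) (ℓ : ℕ) :
    (gonMeasure n K P p).real (jointDegEvent n K P x y ℓ) =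
      𝔼 A : KeyRing P K, 𝔼 B : KeyRing P K, (1 - linkProb p A B) *
        pairDegProb (others x y) ℓ (pef K P p) (commonNbrProb p A B) := by
  have := isProbabilityMeasure_gonMeasure (n := n) h h0 h1
  have hsub : ∀ XY ∈ (others x y).powersetCard ℓ ×ˢ (others x y).powersetCard ℓ,
      XY.1 ⊆ others x y ∧ XY.2 ⊆ others x y := fun XY hXY =>
    ⟨(mem_powersetCard.1 (mem_product.1 hXY).1).1, (mem_powersetCard.1 (mem_product.1 hXY).2).1⟩
  rw [jointDegEvent_eq_biUnion_nbhdEvent,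
    measureReal_biUnion_finset ((pairwiseDisjoint_nbhdEvent x y).subset hsub)
      fun XY _ => (Set.toFinite _).measurableSet]
  simp_rw [pairDegProb, ← sum_product', mul_sum, expect_sum_comm]
  exact sum_congr rfl fun XY hXY =>
    measureReal_nbhdEvent h h0 h1 hxy (hsub XY hXY).1 (hsub XY hXY).2

end JointDegree

section AveragedBounds

open Finset
open scoped BigOperators

variable {V : Type*} [DecidableEq V] {W : Finset V} {ℓ K P : ℕ} {p : ℝ}

theorem commonNbrProb_le_sq_pef_of_not_sharesKey (h : K ≤ P) (h0 : 0 ≤ p) (hps : psf K P ≤ 1 / 2)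
    {A B : KeyRing P K} (hAB : ¬ SharesKey A B) : commonNbrProb p A B ≤ 4 * pef K P p ^ 2 := by
  simpa [not_nonempty_iff_eq_empty.1 hAB] using commonNbrProb_le_add_sq_pef h h0 hps A B

/-- The factor by which the bound on the joint degree probability of two nodes exceeds the squared
Poisson weight when their key rings are disjoint; `N` counts the remaining nodes and `e` is the
edge probability. -/
def poissonError (N ℓ : ℕ) (e : ℝ) : ℝ := Real.exp (4 * N * e ^ 2 + 4 * ℓ * e + 4 * ℓ ^ 2 / N)

theorem pairDegProb_commonNbrProb_le_of_not_sharesKey (h : K ≤ P) (h0 : 0 ≤ p) (h1 : p ≤ 1)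
    (hps : psf K P ≤ 1 / 2) (he0 : 0 < pef K P p) (he : 2 * pef K P p ≤ 1) {A B : KeyRing P K}
    (hAB : ¬ SharesKey A B) :
    pairDegProb W ℓ (pef K P p) (commonNbrProb p A B) ≤
      poissonWeight (#W * pef K P p) ℓ ^ 2 * poissonError (#W) ℓ (pef K P p) := by
  have hq := commonNbrProb_le_sq_pef_of_not_sharesKey h h0 hps hAB
  refine (pairDegProb_le (commonNbrProb_nonneg h0 A B) (commonNbrProb_le_pef h h0 h1 A B) he0
    he).trans ?_
  rw [poissonError]
  gcongr poissonWeight _ _ ^ 2 * Real.exp (?_ + _ + ?_)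
  · nlinarith
  · rw [mul_div_assoc 4]
    gcongr
    rwa [div_le_iff₀ (by positivity)]

theorem pairDegProb_commonNbrProb_le_mul_pow_card_inter (h : K ≤ P) (h0 : 0 ≤ p) (h1 : p ≤ 1)
    (hps : psf K P ≤ 1 / 2) (he0 : 0 < pef K P p) (he : 2 * pef K P p ≤ 1) (A B : KeyRing P K) :
    pairDegProb W ℓ (pef K P p) (commonNbrProb p A B) ≤
      poissonWeight (#W * pef K P p) ℓ ^ 2 * poissonError (#W) ℓ (pef K P p) *
        (Real.exp (ℓ ^ 2 / (#W * pef K P p)) *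
          Real.exp (#W * (p ^ 2 * K / P)) ^ #(A.1 ∩ B.1)) := by
  have hq := commonNbrProb_le_add_sq_pef h h0 hps A B
  have hqe := commonNbrProb_le_pef h h0 h1 A B
  set e := pef K P p
  set q := commonNbrProb p A B with hq_def
  have hqN : q * #W ≤ 4 * #W * e ^ 2 + #(A.1 ∩ B.1) * (#W * (p ^ 2 * K / P)) := by
    calc q * #W ≤ (#(A.1 ∩ B.1) * (p ^ 2 * K / P) + 4 * e ^ 2) * #W := by gcongr
      _ = _ := by ring
  have hqe' : q / e ^ 2 * (ℓ ^ 2 / #W) ≤ ℓ ^ 2 / (#W * e) := by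
    calc q / e ^ 2 * (ℓ ^ 2 / #W) ≤ e / e ^ 2 * (ℓ ^ 2 / #W) := by gcongr
      _ = ℓ ^ 2 / (#W * e) := by field_simp
  refine (pairDegProb_le (hq_def ▸ commonNbrProb_nonneg h0 A B) hqe he0 he).trans ?_
  rw [poissonError, ← Real.exp_nat_mul, ← Real.exp_add, mul_assoc (poissonWeight _ _ ^ 2),
    ← Real.exp_add]
  gcongr _ * Real.exp ?_
  have : 0 ≤ 4 * (ℓ : ℝ) ^ 2 / #W := by positivity
  linarith

theorem expect_pairDegProb_commonNbrProb_le (h : K ≤ P) (h0 : 0 ≤ p) (h1 : p ≤ 1)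
    (hps : psf K P ≤ 1 / 2) (he0 : 0 < pef K P p) (he : 2 * pef K P p ≤ 1) :
    𝔼 A : KeyRing P K, 𝔼 B : KeyRing P K,
        (1 - linkProb p A B) * pairDegProb W ℓ (pef K P p) (commonNbrProb p A B) ≤
      poissonWeight (#W * pef K P p) ℓ ^ 2 * poissonError (#W) ℓ (pef K P p) *
        (1 + Real.exp (ℓ ^ 2 / (#W * pef K P p)) *
          (Real.exp (Real.exp (#W * (p ^ 2 * K / P)) * (K ^ 2 / P)) - 1)) := by
  have := nonempty_keyRing h
  set M := poissonWeight (#W * pef K P p) ℓ ^ 2 * poissonError (#W) ℓ (pef K P p) with hM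
  set C := Real.exp (ℓ ^ 2 / (#W * pef K P p))
  set s := Real.exp (#W * (p ^ 2 * K / P))
  have hM0 : 0 ≤ M := by rw [hM, poissonError]; positivity
  have hAB : ∀ A B : KeyRing P K,
      (1 - linkProb p A B) * pairDegProb W ℓ (pef K P p) (commonNbrProb p A B) ≤
        M * (1 + C * if SharesKey A B then s ^ #(A.1 ∩ B.1) else 0) := by
    intro A B
    refine (mul_le_of_le_one_left (pairDegProb_nonneg (commonNbrProb_nonneg h0 A B)
      (commonNbrProb_le_pef h h0 h1 A B) he)
      (sub_le_self _ (linkProb_nonneg h0 A B))).trans ?_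
    split_ifs with hAB
    · refine (pairDegProb_commonNbrProb_le_mul_pow_card_inter h h0 h1 hps he0 he A B).trans ?_
      gcongr
      linarith
    · simpa using pairDegProb_commonNbrProb_le_of_not_sharesKey h h0 h1 hps he0 he hAB
  refine expect_le univ_nonempty fun A _ => (expect_le_expect fun B _ => hAB A B).trans ?_
  rw [← mul_expect, expect_add_distrib, Fintype.expect_const, ← mul_expect]
  gcongr
  exact expect_sharesKey_pow_le h A (by positivity)

/-- Pairs of disjoint key rings already carry the main term. -/
theorem le_expect_pairDegProb_commonNbrProb (h : K ≤ P) (h0 : 0 ≤ p) (h1 : p ≤ 1)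
    (hps : psf K P ≤ 1 / 2) (he0 : 0 < pef K P p) (he : 4 * pef K P p ≤ 1)
    (hNe : 4 * #W * pef K P p ^ 2 ≤ 1) (hℓ : 2 * ℓ ≤ #W) (hW : 0 < #W) :
    poissonWeight (#W * pef K P p) ℓ ^ 2 *
        (((1 - 2 * ℓ / #W) * (1 - 4 * pef K P p)) ^ (2 * ℓ) * (1 - 4 * #W * pef K P p ^ 2) *
          (1 - psf K P)) ≤
      𝔼 A : KeyRing P K, 𝔼 B : KeyRing P K,
        (1 - linkProb p A B) * pairDegProb W ℓ (pef K P p) (commonNbrProb p A B) := by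
  have := nonempty_keyRing h
  set m := ((1 - 2 * (ℓ : ℝ) / #W) * (1 - 4 * pef K P p)) ^ (2 * ℓ) *
    (1 - 4 * #W * pef K P p ^ 2) with hm
  have hℓN : 0 ≤ 1 - 2 * (ℓ : ℝ) / #W := by
    rw [sub_nonneg, div_le_one (by positivity)]
    exact_mod_cast hℓ
  have hAB : ∀ A B : KeyRing P K,
      poissonWeight (#W * pef K P p) ℓ ^ 2 * m * (1 - if SharesKey A B then 1 else 0) ≤
        (1 - linkProb p A B) * pairDegProb W ℓ (pef K P p) (commonNbrProb p A B) := by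
    intro A B
    have hq0 := commonNbrProb_nonneg h0 A B
    have hqe := commonNbrProb_le_pef h h0 h1 A B
    by_cases hAB : SharesKey A B
    · simpa [hAB] using mul_nonneg (sub_nonneg.2 (linkProb_le_one h1 A B))
        (pairDegProb_nonneg hq0 hqe (by linarith))
    · have hq : commonNbrProb p A B / pef K P p ≤ 4 * pef K P p := by
        rw [div_le_iff₀ he0, mul_assoc, ← sq]
        exact commonNbrProb_le_sq_pef_of_not_sharesKey h h0 hps hAB
      have hle := le_pairDegProb hq0 hqe he0 (by linarith) hℓ hW
      simp only [linkProb, hAB, if_false, sub_zero, mul_one, one_mul]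
      refine le_trans ?_ hle
      rw [hm]
      have : 0 ≤ 1 - 4 * pef K P p := by linarith
      have : 0 ≤ 1 - 4 * #W * pef K P p ^ 2 := by linarith
      gcongr
  refine le_expect univ_nonempty fun A _ => le_trans ?_ (expect_le_expect fun B _ => hAB A B)
  rw [← mul_expect, expect_sub_distrib, expect_sharesKey h, Fintype.expect_const,
    mul_assoc _ m]

variable {n : ℕ} {x y : Fin n}

theorem measureReal_jointDegEvent_le (h : K ≤ P) (h0 : 0 ≤ p) (h1 : p ≤ 1) (hps : psf K P ≤ 1 / 2)
    (he0 : 0 < pef K P p) (he : 2 * pef K P p ≤ 1) (hxy : x ≠ y) :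
    (gonMeasure n K P p).real (jointDegEvent n K P x y ℓ) ≤
      poissonWeight ((n - 2 : ℕ) * pef K P p) ℓ ^ 2 * (poissonError (n - 2) ℓ (pef K P p) *
        (1 + Real.exp (ℓ ^ 2 / ((n - 2 : ℕ) * pef K P p)) *
          (Real.exp (Real.exp ((n - 2 : ℕ) * (p ^ 2 * K / P)) * (K ^ 2 / P)) - 1))) := by
  have hcard : #(others x y) = n - 2 := by rw [card_others hxy, Fintype.card_fin]
  rw [measureReal_jointDegEvent h h0 h1 hxy, ← mul_assoc, ← hcard]
  exact expect_pairDegProb_commonNbrProb_le h h0 h1 hps he0 he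

theorem le_measureReal_jointDegEvent (h : K ≤ P) (h0 : 0 ≤ p) (h1 : p ≤ 1) (hps : psf K P ≤ 1 / 2)
    (he0 : 0 < pef K P p) (he : 4 * pef K P p ≤ 1)
    (hne : 4 * (n - 2 : ℕ) * pef K P p ^ 2 ≤ 1) (hℓ : 2 * ℓ ≤ n - 2) (hn : 2 < n) (hxy : x ≠ y) :
    poissonWeight ((n - 2 : ℕ) * pef K P p) ℓ ^ 2 *
        (((1 - 2 * ℓ / (n - 2 : ℕ)) * (1 - 4 * pef K P p)) ^ (2 * ℓ) *
          (1 - 4 * (n - 2 : ℕ) * pef K P p ^ 2) * (1 - psf K P)) ≤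
      (gonMeasure n K P p).real (jointDegEvent n K P x y ℓ) := by
  have hcard : #(others x y) = n - 2 := by rw [card_others hxy, Fintype.card_fin]
  rw [measureReal_jointDegEvent h h0 h1 hxy]
  rw [← hcard] at hne hℓ ⊢
  exact le_expect_pairDegProb_commonNbrProb h h0 h1 hps he0 he hne hℓ (by omega)

end AveragedBounds

section Asymptotics

open scoped Topology

theorem tendsto_log_natCast_atTop : Tendsto (fun n : ℕ => Real.log n) atTop atTop :=
  Real.tendsto_log_atTop.comp tendsto_natCast_atTop_atTop

theorem tendsto_log_pow_div_rpow_natCast (j : ℕ) {s : ℝ} (hs : 0 < s) :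
    Tendsto (fun n : ℕ => Real.log n ^ j / (n : ℝ) ^ s) atTop (𝓝 0) := by
  have h := (isLittleO_log_rpow_rpow_atTop (j : ℝ) hs).tendsto_div_nhds_zero.comp
    (tendsto_natCast_atTop_atTop (R := ℝ))
  simpa [Function.comp_def] using h

theorem eventually_log_add_mul_log_log_add_le (β : ℝ) {c : ℝ} (hc : 1 < c) {α : ℕ → ℝ}
    (hα : Tendsto α atTop atBot) :
    ∀ᶠ n : ℕ in atTop, Real.log n + β * Real.log (Real.log n) + α n ≤ c * Real.log n := by
  have hloglog : (fun n : ℕ => β * Real.log (Real.log n)) =o[atTop] fun n : ℕ => Real.log n :=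
    (Real.isLittleO_log_id_atTop.comp_tendsto tendsto_log_natCast_atTop).const_mul_left β
  filter_upwards [hloglog.bound (sub_pos.2 hc), hα.eventually_le_atBot 0,
    tendsto_log_natCast_atTop.eventually_ge_atTop 0] with n hβ hαn hlog
  rw [Real.norm_of_nonneg hlog] at hβ
  linarith [Real.le_norm_self (β * Real.log (Real.log n))]

theorem nonneg_of_eventually_mul_le_mul_log {e : ℕ → ℝ} {c : ℝ} (he0 : ∀ n, 0 ≤ e n)
    (hle : ∀ᶠ n : ℕ in atTop, n * e n ≤ c * Real.log n) : 0 ≤ c := by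
  obtain ⟨n, hn, hlog⟩ := (hle.and (tendsto_log_natCast_atTop.eventually_gt_atTop 0)).exists
  have : 0 ≤ n * e n := mul_nonneg n.cast_nonneg (he0 n)
  exact nonneg_of_mul_nonneg_left (this.trans hn) hlog

theorem tendsto_mul_sq_zero_of_mul_le_mul_log {e : ℕ → ℝ} {c : ℝ} (he0 : ∀ n, 0 ≤ e n)
    (hle : ∀ᶠ n : ℕ in atTop, n * e n ≤ c * Real.log n) :
    Tendsto (fun n : ℕ => n * e n ^ 2) atTop (𝓝 0) := by
  have hlim := (tendsto_log_pow_div_rpow_natCast 2 one_pos).const_mul (c ^ 2)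
  rw [mul_zero] at hlim
  refine squeeze_zero' (.of_forall fun n => by positivity) ?_ hlim
  filter_upwards [hle, eventually_gt_atTop 0] with n hle hn
  have : 0 ≤ n * e n := mul_nonneg n.cast_nonneg (he0 n)
  calc n * e n ^ 2 = (n * e n) ^ 2 / n := by field_simp
    _ ≤ (c * Real.log n) ^ 2 / n := by gcongr
    _ = c ^ 2 * (Real.log n ^ 2 / (n : ℝ) ^ (1 : ℝ)) := by rw [Real.rpow_one]; ring

theorem tendsto_zero_of_mul_le_mul_log {e : ℕ → ℝ} {c : ℝ} (he0 : ∀ n, 0 ≤ e n)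
    (hle : ∀ᶠ n : ℕ in atTop, n * e n ≤ c * Real.log n) : Tendsto e atTop (𝓝 0) := by
  have hsq : Tendsto (fun n => e n ^ 2) atTop (𝓝 0) := by
    refine squeeze_zero' (.of_forall fun n => sq_nonneg _) ?_
      (tendsto_mul_sq_zero_of_mul_le_mul_log he0 hle)
    filter_upwards [eventually_ge_atTop 1] with n hn
    exact le_mul_of_one_le_left (sq_nonneg _) (by exact_mod_cast hn)
  simpa [Real.sqrt_sq, he0] using hsq.sqrt

theorem tendsto_poissonWeight_div {ι : Type*} {l : Filter ι} {μ ν : ι → ℝ} (ℓ : ℕ)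
    (hsub : Tendsto (fun i => ν i - μ i) l (𝓝 0)) (hdiv : Tendsto (fun i => μ i / ν i) l (𝓝 1)) :
    Tendsto (fun i => poissonWeight (μ i) ℓ / poissonWeight (ν i) ℓ) l (𝓝 1) := by
  have hratio : ∀ i, poissonWeight (μ i) ℓ / poissonWeight (ν i) ℓ =
      Real.exp (ν i - μ i) * (μ i / ν i) ^ ℓ := by
    intro i
    rw [poissonWeight, poissonWeight, mul_div_mul_comm, ← Real.exp_sub,
      div_div_div_cancel_right₀ (by positivity), div_pow]
    ring_nf
  simpa [hratio] using hsub.rexp.mul (hdiv.pow ℓ)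

theorem tendsto_poissonError {ι : Type*} {l : Filter ι} {N : ι → ℕ} {e : ι → ℝ} (ℓ : ℕ)
    (hN : Tendsto N l atTop) (he : Tendsto e l (𝓝 0))
    (hNe : Tendsto (fun i => N i * e i ^ 2) l (𝓝 0)) :
    Tendsto (fun i => poissonError (N i) ℓ (e i)) l (𝓝 1) := by
  have hN' := (tendsto_natCast_atTop_atTop (R := ℝ)).comp hN
  have h := ((hNe.const_mul 4).add (he.const_mul (4 * (ℓ : ℝ)))).add
    (hN'.const_div_atTop (4 * (ℓ : ℝ) ^ 2))
  simpa [poissonError, mul_assoc] using h.rexp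

theorem exp_mul_sq_div_le {n K P : ℕ} {p b m : ℝ} (hn : 0 < n) (hp0 : 0 ≤ p) (hp1 : p ≤ 1)
    (hm : 0 < m) (hb : 0 ≤ b) (hmK : m ≤ K)
    (hle : n * (p * (K ^ 2 / P)) ≤ b * m * Real.log n) :
    Real.exp (n * (p ^ 2 * K / P)) * (K ^ 2 / P) ≤
      Real.exp b * (K ^ 2 / P) + b * m * (Real.log n ^ 2 / (n : ℝ) ^ (1 - b)) := by
  have hn0 : (0 : ℝ) < n := by exact_mod_cast hn
  have hlog : 0 ≤ Real.log n := Real.log_natCast_nonneg n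
  set a : ℝ := (K : ℝ) ^ 2 / P with ha
  have hexp : n * (p ^ 2 * K / P) ≤ b * (p * Real.log n) := by
    refine le_of_mul_le_mul_left ?_ hm
    calc m * (n * (p ^ 2 * K / P)) ≤ K * (n * (p ^ 2 * K / P)) := by gcongr
      _ = p * (n * (p * a)) := by rw [ha]; ring
      _ ≤ p * (b * m * Real.log n) := by gcongr
      _ = m * (b * (p * Real.log n)) := by ring
  have hsmall : 0 ≤ Real.exp b * a := by positivity
  have hlarge : 0 ≤ b * m * (Real.log n ^ 2 / (n : ℝ) ^ (1 - b)) := by positivity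
  -- If `p log n ≤ 1`, the exponential is bounded; otherwise `K² / P` is at most `b m (log n)² / n`.
  rcases le_total (p * Real.log n) 1 with hpl | hpl
  · have : Real.exp (n * (p ^ 2 * K / P)) * a ≤ Real.exp b * a := by
      gcongr
      exact hexp.trans (mul_le_of_le_one_right hb hpl)
    linarith
  · have hexp' : Real.exp (n * (p ^ 2 * K / P)) ≤ (n : ℝ) ^ b := by
      rw [Real.rpow_def_of_pos hn0, Real.exp_le_exp, mul_comm (Real.log n)]
      exact hexp.trans (by gcongr; exact mul_le_of_le_one_left hlog hp1)
    have ha' : a ≤ b * m * Real.log n ^ 2 / n := by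
      rw [le_div_iff₀ hn0]
      calc a * n ≤ a * n * (p * Real.log n) := le_mul_of_one_le_right (by positivity) hpl
        _ = n * (p * a) * Real.log n := by ring
        _ ≤ b * m * Real.log n * Real.log n := by gcongr
        _ = b * m * Real.log n ^ 2 := by ring
    calc Real.exp (n * (p ^ 2 * K / P)) * a ≤ (n : ℝ) ^ b * (b * m * Real.log n ^ 2 / n) := by
          gcongr
      _ = b * m * (Real.log n ^ 2 / (n : ℝ) ^ (1 - b)) := by
          rw [Real.rpow_sub hn0, Real.rpow_one]
          field_simp
      _ ≤ _ := le_add_of_nonneg_left hsmall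

variable {K P : ℕ → ℕ} {p : ℕ → ℝ} {c m : ℝ}

theorem tendsto_sq_div_zero (hKP : ∀ n, K n ≤ P n)
    (hps : Tendsto (fun n => psf (K n) (P n)) atTop (𝓝 0)) :
    Tendsto (fun n => (K n : ℝ) ^ 2 / P n) atTop (𝓝 0) := by
  have hlim := hps.const_mul 2
  rw [mul_zero] at hlim
  refine squeeze_zero' (.of_forall fun n => by positivity) ?_ hlim
  filter_upwards [hps.eventually_le_const one_half_pos] with n hn
  exact sq_div_le_two_mul_psf (hKP n) hn

theorem eventually_mul_sq_div_le {c' : ℝ} (hKP : ∀ n, K n ≤ P n) (hp0 : ∀ n, 0 ≤ p n)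
    (hps : Tendsto (fun n => psf (K n) (P n)) atTop (𝓝 0))
    (hle : ∀ᶠ n : ℕ in atTop, n * pef (K n) (P n) (p n) ≤ c * Real.log n) (hc : c < c') :
    ∀ᶠ n : ℕ in atTop, n * (p n * ((K n : ℝ) ^ 2 / P n)) ≤ c' * Real.log n := by
  have hlim : Tendsto (fun n => c' * (1 - psf (K n) (P n))) atTop (𝓝 c') := by
    simpa using (hps.const_sub 1).const_mul c'
  filter_upwards [hle, hlim.eventually_const_le hc, hps.eventually_lt_const one_pos]
    with n hle hc' hpsn
  refine le_of_mul_le_mul_right ?_ (sub_pos.2 hpsn)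
  calc n * (p n * ((K n : ℝ) ^ 2 / P n)) * (1 - psf (K n) (P n))
      = n * (p n * ((K n : ℝ) ^ 2 / P n * (1 - psf (K n) (P n)))) := by ring
    _ ≤ n * (p n * psf (K n) (P n)) := by
        gcongr
        exacts [hp0 n, sq_div_mul_one_sub_psf_le (hKP n)]
    _ ≤ c * Real.log n := hle
    _ ≤ c' * (1 - psf (K n) (P n)) * Real.log n := by
        gcongr
    _ = c' * Real.log n * (1 - psf (K n) (P n)) := by ring

theorem tendsto_exp_mul_sq_div_zero (hKP : ∀ n, K n ≤ P n) (hp0 : ∀ n, 0 ≤ p n)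
    (hp1 : ∀ n, p n ≤ 1) (hps : Tendsto (fun n => psf (K n) (P n)) atTop (𝓝 0))
    (hmK : ∀ᶠ n in atTop, m ≤ K n)
    (hle : ∀ᶠ n : ℕ in atTop, n * pef (K n) (P n) (p n) ≤ c * Real.log n) (hcm : c < m) :
    Tendsto (fun n : ℕ => Real.exp (n * (p n ^ 2 * K n / P n)) * ((K n : ℝ) ^ 2 / P n))
      atTop (𝓝 0) := by
  have hc0 : 0 ≤ c :=
    nonneg_of_eventually_mul_le_mul_log (fun n => pef_nonneg (hKP n) (hp0 n)) hle
  have hm : 0 < m := hc0.trans_lt hcm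
  obtain ⟨b, hcb, hb1⟩ := exists_between ((div_lt_one hm).2 hcm)
  have hb0 : 0 ≤ b := (div_nonneg hc0 hm.le).trans hcb.le
  have hlim := ((tendsto_sq_div_zero hKP hps).const_mul (Real.exp b)).add
    ((tendsto_log_pow_div_rpow_natCast 2 (sub_pos.2 hb1)).const_mul (b * m))
  rw [mul_zero, mul_zero, add_zero] at hlim
  refine squeeze_zero' (.of_forall fun n => by positivity) ?_ hlim
  filter_upwards [hmK, eventually_mul_sq_div_le hKP hp0 hps hle ((div_lt_iff₀ hm).1 hcb),
    eventually_gt_atTop 0] with n hmK hle hn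
  exact exp_mul_sq_div_le hn (hp0 n) (hp1 n) hm hb0 hmK hle

theorem tendsto_sub_mul_sq_pef_zero (hKP : ∀ n, K n ≤ P n) (hp0 : ∀ n, 0 ≤ p n)
    (hle : ∀ᶠ n : ℕ in atTop, n * pef (K n) (P n) (p n) ≤ c * Real.log n) (k : ℕ) :
    Tendsto (fun n : ℕ => ((n - k : ℕ) : ℝ) * pef (K n) (P n) (p n) ^ 2) atTop (𝓝 0) := by
  refine squeeze_zero (fun n => by positivity) (fun n => ?_)
    (tendsto_mul_sq_zero_of_mul_le_mul_log (fun n => pef_nonneg (hKP n) (hp0 n)) hle)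
  gcongr
  exact n.sub_le k

theorem tendsto_poissonWeight_sub_div {e : ℕ → ℝ} (he : Tendsto e atTop (𝓝 0))
    (he0 : ∀ᶠ n in atTop, 0 < e n) (k ℓ : ℕ) :
    Tendsto (fun n : ℕ => poissonWeight ((n - k : ℕ) * e n) ℓ / poissonWeight (n * e n) ℓ)
      atTop (𝓝 1) := by
  refine tendsto_poissonWeight_div ℓ ?_ ?_
  · have hlim := he.const_mul (k : ℝ)
    rw [mul_zero] at hlim
    refine hlim.congr' ?_
    filter_upwards [eventually_ge_atTop k] with n hn
    rw [Nat.cast_sub hn]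
    ring
  · have hlim := (tendsto_const_div_atTop_nhds_zero_nat (k : ℝ)).const_sub 1
    rw [sub_zero] at hlim
    refine hlim.congr' ?_
    filter_upwards [he0, eventually_ge_atTop k, eventually_gt_atTop 0] with n he0 hn hn0
    rw [Nat.cast_sub hn]
    field_simp

theorem eventually_sq_div_sub_mul_le {e : ℕ → ℝ} {ℓ : ℕ}
    (hℓ : ℓ = 0 ∨ ∃ ε : ℝ, 0 < ε ∧ ∀ᶠ n : ℕ in atTop, ε < n * e n) (k : ℕ) :
    ∃ C : ℝ, ∀ᶠ n : ℕ in atTop, (ℓ : ℝ) ^ 2 / ((n - k : ℕ) * e n) ≤ C := by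
  obtain rfl | ⟨ε, hε, hne⟩ := hℓ
  · exact ⟨0, by simp⟩
  · refine ⟨ℓ ^ 2 / (ε / 2), ?_⟩
    filter_upwards [hne, eventually_ge_atTop (2 * k)] with n hne hn
    have he : 0 < e n := pos_of_mul_pos_right (hε.trans hne) n.cast_nonneg
    have hhalf : (n : ℝ) / 2 ≤ (n - k : ℕ) := by
      rw [div_le_iff₀ two_pos]
      exact_mod_cast (by omega : n ≤ (n - k) * 2)
    gcongr
    calc ε / 2 ≤ n / 2 * e n := by linarith
      _ ≤ (n - k : ℕ) * e n := by gcongr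

theorem tendsto_upperFactor (hKP : ∀ n, K n ≤ P n) (hp0 : ∀ n, 0 ≤ p n) (hp1 : ∀ n, p n ≤ 1)
    (hps : Tendsto (fun n => psf (K n) (P n)) atTop (𝓝 0)) (hmK : ∀ᶠ n in atTop, m ≤ K n)
    (hle : ∀ᶠ n : ℕ in atTop, n * pef (K n) (P n) (p n) ≤ c * Real.log n) (hcm : c < m)
    {ℓ k : ℕ} {C : ℝ}
    (hC : ∀ᶠ n : ℕ in atTop, (ℓ : ℝ) ^ 2 / ((n - k : ℕ) * pef (K n) (P n) (p n)) ≤ C) :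
    Tendsto (fun n : ℕ => poissonError (n - k) ℓ (pef (K n) (P n) (p n)) *
      (1 + Real.exp (ℓ ^ 2 / ((n - k : ℕ) * pef (K n) (P n) (p n))) *
        (Real.exp (Real.exp ((n - k : ℕ) * (p n ^ 2 * K n / P n)) * (K n ^ 2 / P n)) - 1)))
      atTop (𝓝 1) := by
  have he := tendsto_zero_of_mul_le_mul_log (fun n => pef_nonneg (hKP n) (hp0 n)) hle
  have herr := tendsto_poissonError ℓ (tendsto_sub_atTop_nat k) he
    (tendsto_sub_mul_sq_pef_zero hKP hp0 hle k)
  have hshare : Tendsto (fun n : ℕ => Real.exp C *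
      (Real.exp (Real.exp (n * (p n ^ 2 * K n / P n)) * (K n ^ 2 / P n)) - 1)) atTop (𝓝 0) := by
    simpa using ((tendsto_exp_mul_sq_div_zero hKP hp0 hp1 hps hmK hle hcm).rexp.sub_const
      1).const_mul (Real.exp C)
  have hpair : Tendsto (fun n : ℕ => Real.exp (ℓ ^ 2 / ((n - k : ℕ) * pef (K n) (P n) (p n))) *
      (Real.exp (Real.exp ((n - k : ℕ) * (p n ^ 2 * K n / P n)) * (K n ^ 2 / P n)) - 1))
      atTop (𝓝 0) := by
    refine squeeze_zero' (.of_forall fun n => ?_) (hC.mono fun n hC => ?_) hshare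
    · exact mul_nonneg (Real.exp_nonneg _) (sub_nonneg.2 (Real.one_le_exp (by positivity)))
    · have : 0 ≤ Real.exp (Real.exp ((n - k : ℕ) * (p n ^ 2 * K n / P n)) * (K n ^ 2 / P n)) - 1 :=
        sub_nonneg.2 (Real.one_le_exp (by positivity))
      gcongr
      exact n.sub_le k
  simpa using herr.mul (hpair.const_add 1)

theorem tendsto_lowerFactor (hKP : ∀ n, K n ≤ P n) (hp0 : ∀ n, 0 ≤ p n)
    (hps : Tendsto (fun n => psf (K n) (P n)) atTop (𝓝 0))
    (hle : ∀ᶠ n : ℕ in atTop, n * pef (K n) (P n) (p n) ≤ c * Real.log n) (ℓ k : ℕ) :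
    Tendsto (fun n : ℕ =>
      ((1 - 2 * ℓ / (n - k : ℕ)) * (1 - 4 * pef (K n) (P n) (p n))) ^ (2 * ℓ) *
        (1 - 4 * (n - k : ℕ) * pef (K n) (P n) (p n) ^ 2) * (1 - psf (K n) (P n)))
      atTop (𝓝 1) := by
  have he := tendsto_zero_of_mul_le_mul_log (fun n => pef_nonneg (hKP n) (hp0 n)) hle
  have hN := (tendsto_natCast_atTop_atTop (R := ℝ)).comp (tendsto_sub_atTop_nat k)
  have h := (((((hN.const_div_atTop (2 * (ℓ : ℝ))).const_sub 1).mul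
    ((he.const_mul 4).const_sub 1)).pow (2 * ℓ)).mul
    (((tendsto_sub_mul_sq_pef_zero hKP hp0 hle k).const_mul 4).const_sub 1)).mul
    (hps.const_sub 1)
  simpa [mul_assoc] using h

theorem eventually_pef_pos (hKP : ∀ n, K n ≤ P n) (hp0 : ∀ n, 0 < p n)
    (hmK : ∀ᶠ n in atTop, m ≤ K n) (hm : 0 < m) :
    ∀ᶠ n in atTop, 0 < pef (K n) (P n) (p n) :=
  hmK.mono fun n hn => mul_pos (hp0 n) (psf_pos (hKP n) (by exact_mod_cast hm.trans_le hn))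

theorem tendsto_measureReal_jointDegEvent_div (hKP : ∀ n, K n ≤ P n) (hp0 : ∀ n, 0 ≤ p n)
    (hp1 : ∀ n, p n ≤ 1) (hps : Tendsto (fun n => psf (K n) (P n)) atTop (𝓝 0))
    (hmK : ∀ᶠ n in atTop, m ≤ K n)
    (hle : ∀ᶠ n : ℕ in atTop, n * pef (K n) (P n) (p n) ≤ c * Real.log n) (hcm : c < m)
    (hpos : ∀ᶠ n in atTop, 0 < pef (K n) (P n) (p n)) {x y : ℕ} (hxy : x ≠ y) {ℓ : ℕ}
    (hℓ : ℓ = 0 ∨ ∃ ε : ℝ, 0 < ε ∧ ∀ᶠ n : ℕ in atTop, ε < n * pef (K n) (P n) (p n)) :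
    Tendsto (fun n : ℕ =>
        (gonMeasure n (K n) (P n) (p n)).real (jointDegEvent n (K n) (P n) x y ℓ) /
          poissonWeight ((n - 2 : ℕ) * pef (K n) (P n) (p n)) ℓ ^ 2) atTop (𝓝 1) := by
  obtain ⟨C, hC⟩ := eventually_sq_div_sub_mul_le hℓ 2
  have he := tendsto_zero_of_mul_le_mul_log (fun n => pef_nonneg (hKP n) (hp0 n)) hle
  have hne := tendsto_sub_mul_sq_pef_zero hKP hp0 hle 2
  have hquarter : (0 : ℝ) < 1 / 4 := by norm_num
  have hweight : ∀ᶠ n : ℕ in atTop,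
      0 < poissonWeight ((n - 2 : ℕ) * pef (K n) (P n) (p n)) ℓ ^ 2 := by
    filter_upwards [hpos, eventually_gt_atTop 2] with n hpos hn
    have hn2 : (0 : ℝ) < (n - 2 : ℕ) := by exact_mod_cast Nat.sub_pos_of_lt hn
    exact pow_pos (poissonWeight_pos (mul_pos hn2 hpos) ℓ) 2
  refine tendsto_of_tendsto_of_tendsto_of_le_of_le' (tendsto_lowerFactor hKP hp0 hps hle ℓ 2)
    (tendsto_upperFactor hKP hp0 hp1 hps hmK hle hcm hC) ?_ ?_
  · filter_upwards [hweight, hpos, hps.eventually_le_const one_half_pos,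
      he.eventually_le_const hquarter, hne.eventually_le_const hquarter,
      eventually_ge_atTop (2 * ℓ + 3), eventually_gt_atTop x, eventually_gt_atTop y]
      with n hweight hpos hpsn he hne hn hx hy
    rw [le_div_iff₀' hweight]
    exact le_measureReal_jointDegEvent (x := ⟨x, hx⟩) (y := ⟨y, hy⟩) (hKP n) (hp0 n) (hp1 n) hpsn
      hpos (by linarith) (by linarith) (by omega) (by omega) (by simpa using hxy)
  · filter_upwards [hweight, hpos, hps.eventually_le_const one_half_pos,
      he.eventually_le_const one_half_pos, eventually_gt_atTop x, eventually_gt_atTop y]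
      with n hweight hpos hpsn he hx hy
    rw [div_le_iff₀' hweight]
    exact measureReal_jointDegEvent_le (x := ⟨x, hx⟩) (y := ⟨y, hy⟩) (hKP n) (hp0 n) (hp1 n) hpsn
      hpos (by linarith) (by simpa using hxy)

end Asymptotics

theorem gon_joint_degree_no_edge_asymptotics_general
    {K P : ℕ → ℕ} {p : ℕ → ℝ} {c m : ℝ}
    (hKP : ∀ n, K n ≤ P n) (hp0 : ∀ n, 0 < p n) (hp1 : ∀ n, p n ≤ 1)
    (hps : Tendsto (fun n => psf (K n) (P n)) atTop (nhds 0))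
    (hmK : ∀ᶠ n in atTop, m ≤ K n)
    (hle : ∀ᶠ n : ℕ in atTop, n * pef (K n) (P n) (p n) ≤ c * Real.log n) (hcm : c < m)
    {x y : ℕ} (hxy : x ≠ y) {ℓ : ℕ}
    (hℓ : ℓ = 0 ∨ ∃ ε : ℝ, 0 < ε ∧ ∀ᶠ n : ℕ in atTop, ε < n * pef (K n) (P n) (p n)) :
    Tendsto (fun n : ℕ =>
        (gonMeasure n (K n) (P n) (p n)
            (degEvent n (K n) (P n) x ℓ ∩ degEvent n (K n) (P n) y ℓ ∩
              (edgeEvent n (K n) (P n) x y)ᶜ)).toReal /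
          ((1 / (ℓ.factorial : ℝ) ^ 2) * (pef (K n) (P n) (p n) * n) ^ (2 * ℓ) *
            Real.exp (-2 * (pef (K n) (P n) (p n) * n))))
      atTop (nhds 1) := by
  have he0 := fun n => pef_nonneg (hKP n) (hp0 n).le
  have hm : 0 < m := (nonneg_of_eventually_mul_le_mul_log he0 hle).trans_lt hcm
  have hpos := eventually_pef_pos hKP hp0 hmK hm
  have hevent := tendsto_measureReal_jointDegEvent_div hKP (fun n => (hp0 n).le) hp1 hps hmK hle
    hcm hpos hxy hℓ
  have hweight := (tendsto_poissonWeight_sub_div (tendsto_zero_of_mul_le_mul_log he0 hle) hpos 2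
    ℓ).pow 2
  have hlim := hevent.mul hweight
  rw [one_pow, mul_one] at hlim
  refine hlim.congr' ?_
  filter_upwards [hpos, eventually_gt_atTop 2] with n hpos hn
  have hn2 : (0 : ℝ) < (n - 2 : ℕ) := by exact_mod_cast Nat.sub_pos_of_lt hn
  have hne := (pow_pos (poissonWeight_pos (mul_pos hn2 hpos) ℓ) 2).ne'
  rw [div_pow, div_mul_div_cancel₀ hne, poissonWeight_sq, mul_comm (n : ℝ), measureReal_def]

/-- joint degree asymptotics for two distinct non-adjacent nodes
in `𝔾_on`. -/
theorem gon_joint_degree_no_edge_asymptotics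
    (k : ℕ) (hk : 1 ≤ k) (K P : ℕ → ℕ) (p : ℕ → ℝ)
    (hKP : ∀ n, K n ≤ P n) (hp0 : ∀ n, 0 < p n) (hp1 : ∀ n, p n < 1)
    (hps : Tendsto (fun n : ℕ => psf (K n) (P n)) atTop (nhds 0))
    (hK2 : ∀ᶠ n : ℕ in atTop, 2 ≤ K n)
    (α : ℕ → ℝ)
    (hα : ∀ n : ℕ, 1 ≤ n → pef (K n) (P n) (p n) =
      (Real.log n + ((k : ℝ) - 1) * Real.log (Real.log n) + α n) / (n : ℝ))
    (hαbot : Tendsto α atTop atBot)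
    (x y : ℕ) (hxy : x ≠ y) :
    -- (a)
    ((∃ ε : ℝ, 0 < ε ∧ ∀ᶠ n : ℕ in atTop, ε < (n : ℝ) * pef (K n) (P n) (p n)) →
      ∀ ℓ : ℕ, Tendsto (fun n : ℕ =>
          (gonMeasure n (K n) (P n) (p n)
              (degEvent n (K n) (P n) x ℓ ∩ degEvent n (K n) (P n) y ℓ ∩
                (edgeEvent n (K n) (P n) x y)ᶜ)).toReal /
            ((1 / (ℓ.factorial : ℝ) ^ 2) * (pef (K n) (P n) (p n) * (n : ℝ)) ^ (2 * ℓ) *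
              Real.exp (-2 * (pef (K n) (P n) (p n) * (n : ℝ)))))
        atTop (nhds 1)) ∧
    -- (b)
    Tendsto (fun n : ℕ =>
        (gonMeasure n (K n) (P n) (p n)
            (degEvent n (K n) (P n) x 0 ∩ degEvent n (K n) (P n) y 0 ∩
              (edgeEvent n (K n) (P n) x y)ᶜ)).toReal /
          Real.exp (-2 * (pef (K n) (P n) (p n) * (n : ℝ))))
      atTop (nhds 1) := by
  have hle : ∀ᶠ n : ℕ in atTop, n * pef (K n) (P n) (p n) ≤ 3 / 2 * Real.log n := by
    filter_upwards [eventually_log_add_mul_log_log_add_le (k - 1) (by norm_num : (1 : ℝ) < 3 / 2)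
      hαbot, eventually_ge_atTop 1] with n hn hn1
    rwa [hα n hn1, mul_div_cancel₀ _ (by positivity)]
  have hlim := fun ℓ => gon_joint_degree_no_edge_asymptotics_general (m := 2) (ℓ := ℓ) hKP hp0
    (fun n => (hp1 n).le) hps (by exact_mod_cast hK2) hle (by norm_num) hxy
  exact ⟨fun hε ℓ => hlim ℓ (.inr hε), by simpa using hlim 0 (.inl rfl)⟩
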